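/- arXiv:2106.06710 — 3 statements merged into one kernel-verified Lean document; each statement's English description precedes it below -/
import Mathlib

section
/- Let k ≥ 3 be an odd integer. A finite simple connected graph G is k-periodic if and only if G is isomorphic to the cycle graph C_k. -/
open Matrix

attribute [local instance] Classical.propDecidable

namespace GroverPaper

variable {V : Type*}

/-- The arc set of a simple graph: ordered pairs of adjacent vertices. -/
abbrev Arc (G : SimpleGraph V) : Type _ := {p : V × V // G.Adj p.1 p.2}

/-- The time evolution matrix of the Grover walk on a graph `G`. -/
noncomputable def groverU [Fintype V] (G : SimpleGraph V) :
    Matrix (Arc G) (Arc G) ℂ := fun e f =>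
  if f.val.2 = e.val.1 then
    if e.val = (f.val.2, f.val.1) then 2 / (G.degree f.val.2 : ℂ) - 1
    else 2 / (G.degree f.val.2 : ℂ)
  else 0

/-- A graph is periodic if some positive power of its Grover evolution is the identity. -/
def IsPeriodic [Fintype V] (G : SimpleGraph V) : Prop :=
  ∃ k : ℕ, 0 < k ∧ groverU G ^ k = 1

/-- The period of a periodic graph: the least positive `k` with `U^k = 1`. -/
noncomputable def period [Fintype V] (G : SimpleGraph V) : ℕ :=
  sInf {k : ℕ | 0 < k ∧ groverU G ^ k = 1}

/-- A graph is `k`-periodic if it is periodic with period `k`. -/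
def IsKPeriodic [Fintype V] (G : SimpleGraph V) (k : ℕ) : Prop :=
  IsPeriodic G ∧ period G = k

/-- A graph is odd-periodic if it is periodic with odd period. -/
def IsOddPeriodic [Fintype V] (G : SimpleGraph V) : Prop :=
  IsPeriodic G ∧ Odd (period G)

/-- The transition matrix of the isotropic random walk on `G`. -/
noncomputable def transition [Fintype V] (G : SimpleGraph V) :
    Matrix V V ℝ := fun u v =>
  if G.Adj u v then 1 / (G.degree u : ℝ) else 0

/-!
The time evolution factors as `U = S C`, where the shift `S` and the coin `C` are involutions. If
`U ^ k = 1` with `k` odd, then `S` and `C` are conjugate, so `tr C = tr S = 0`. Since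
`tr C = 2 |V| - |A|`, the graph has as many edges as vertices, and its degrees sum to `2 |V|`.

Every eigenvalue `λ` of `N = D^{-1/2} A D^{-1/2}` has the form `2 λ = z + z⁻¹` with `z ^ k = 1`. The
eigenvalue `λ = 1` is simple, and for `λ ≠ 1` the number `2 + 2 λ = (1 + z) ^ 2 / z` is an algebraic
unit because `k` is odd. Multiplying over all eigenvalues, `2 ^ |V| |det (D + A)| = 4 ^ s ∏ deg v`
with `s ≤ 1`. On the other hand `D + A = B Bᵀ` for the incidence matrix `B`, which is square and has
column sums `2`, so `4` divides `det (D + A) ≠ 0`. Therefore `2 ^ |V| ≤ ∏ deg v`, while the degrees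
have mean `2`, and the equality case of AM-GM forces every degree to be `2`.

A connected `2`-regular graph is a cycle, and on a cycle `U` is the permutation matrix of the
rotation of the arcs, whose order is `|V|`.
-/

section GeneralLemmas

variable {n : Type*} [Fintype n] [DecidableEq n]

lemma isConj_of_odd_pow_mul_eq_one {M : Type*} [Monoid M] {s c : M} (hs : s * s = 1)
    (hc : c * c = 1) {k : ℕ} (hk : Odd k) (h : (s * c) ^ k = 1) : IsConj s c := by
  obtain ⟨u, hu⟩ := IsUnit.of_pow_eq_one h hk.pos.ne'
  obtain ⟨j, rfl⟩ := hk
  have hleft : (s * c) ^ j * s * (c * (s * c) ^ j) = 1 := by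
    rw [mul_assoc, ← mul_assoc s, ← pow_succ', ← pow_add, ← h]
    congr 1
    omega
  have hright : c * (s * c) ^ j * (c * (s * c) ^ j) = 1 := by
    have hsemi : SemiconjBy c (s * c) (c * s) := (mul_assoc c s c).symm
    have hinv : c * s * (s * c) = 1 := by rw [mul_assoc, ← mul_assoc s, hs, one_mul, hc]
    calc c * (s * c) ^ j * (c * (s * c) ^ j) = (c * s) ^ j * c * (c * (s * c) ^ j) := by
          rw [(hsemi.pow_right j).eq]
      _ = (c * s) ^ j * (s * c) ^ j := by rw [mul_assoc, ← mul_assoc c, hc, one_mul]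
      _ = 1 := pow_mul_pow_eq_one j hinv
  exact ⟨u ^ j, by simpa [SemiconjBy, hu] using left_inv_eq_right_inv hleft hright⟩

lemma trace_eq_of_isConj {R : Type*} [CommRing R] {A B : Matrix n n R} (h : IsConj A B) :
    A.trace = B.trace := by
  obtain ⟨u, hu⟩ := h
  rw [← u.mul_inv_eq_iff_eq_mul.2 hu.eq, Matrix.trace_units_conj]

lemma permMatrixHom_injective (R : Type*) [NonAssocSemiring R] [Nontrivial R] :
    Function.Injective (permMatrixHom : Equiv.Perm n →* Matrix n n R) := fun _ _ h =>
  inv_injective <| Equiv.ext fun i =>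
    Option.some_injective _ (DFunLike.congr_fun (PEquiv.toMatrix_injective h) i)

lemma pow_eq_one_of_mulVec_eq_smul {R : Type*} [CommRing R] [IsDomain R] {M : Matrix n n R} {k : ℕ}
    (hM : M ^ k = 1) {z : R} {w : n → R} (hw : w ≠ 0) (h : M *ᵥ w = z • w) : z ^ k = 1 := by
  have hpow := Module.End.HasEigenvector.pow_apply (f := M.toLin')
    ⟨by simpa [Module.End.mem_eigenspace_iff], hw⟩ k
  rw [← Matrix.toLin'_pow, hM, Matrix.toLin'_one, LinearMap.id_apply] at hpow
  exact smul_left_injective R hw (by simpa using hpow.symm)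

lemma dvd_det_of_forall_dvd_sum_col {R : Type*} [CommRing R] [Nonempty n] {B : Matrix n n R} {d : R}
    (h : ∀ j, d ∣ ∑ i, B i j) : d ∣ B.det := by
  obtain ⟨j⟩ := ‹Nonempty n›
  have hsum : ∑ k, (∑ i, B i k) * B.adjugate k j = B.det := by
    have hvec := vecMul_vecMul (1 : n → R) B B.adjugate
    rw [mul_adjugate] at hvec
    simpa [vecMul, dotProduct, Matrix.one_apply] using congrFun hvec j
  exact hsum ▸ Finset.dvd_sum fun k _ => (h k).mul_right _

lemma det_one_add_eq_prod_eigenvalues {𝕜 : Type*} [RCLike 𝕜] {A : Matrix n n 𝕜}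
    (hA : A.IsHermitian) : (1 + A).det = ∏ i, (1 + (hA.eigenvalues i : 𝕜)) := by
  have hneg : scalar n (-1 : 𝕜) - A = -(1 + A) := by
    rw [map_neg, map_one, neg_add']
  have h := congrArg (Polynomial.eval (-1)) hA.charpoly_eq
  rw [eval_charpoly, hneg, det_neg, Polynomial.eval_prod] at h
  have hfactor (i : n) : -1 - (hA.eigenvalues i : 𝕜) = -1 * (1 + hA.eigenvalues i) := by ring
  simp only [Polynomial.eval_sub, Polynomial.eval_X, Polynomial.eval_C, hfactor,
    Finset.prod_mul_distrib, Finset.prod_const, Finset.card_univ] at h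
  exact mul_left_cancel₀ (pow_ne_zero _ (neg_ne_zero.2 one_ne_zero)) h

lemma subsingleton_eigenvalues_eq {A : Matrix n n ℝ} (hA : A.IsHermitian) {μ : ℝ} {v : n → ℝ}
    (h : ∀ x, A *ᵥ x = μ • x → ∃ c : ℝ, x = c • v) :
    {i | hA.eigenvalues i = μ}.Subsingleton := by
  intro i hi j hj
  obtain ⟨a, ha⟩ := h _ (hi ▸ hA.mulVec_eigenvectorBasis i)
  obtain ⟨b, hb⟩ := h _ (hj ▸ hA.mulVec_eigenvectorBasis j)
  by_contra hij
  have horth := hA.eigenvectorBasis.inner_eq_zero hij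
  have hnorm (l : n) := hA.eigenvectorBasis.inner_eq_one l
  simp only [EuclideanSpace.inner_eq_star_dotProduct, star_trivial] at horth hnorm
  have hi1 := hnorm i
  have hj1 := hnorm j
  rw [ha, hb, smul_dotProduct, dotProduct_smul, smul_eq_mul, smul_eq_mul] at horth
  rw [ha, smul_dotProduct, dotProduct_smul, smul_eq_mul, smul_eq_mul] at hi1
  rw [hb, smul_dotProduct, dotProduct_smul, smul_eq_mul, smul_eq_mul] at hj1
  grind

lemma eq_of_sum_eq_of_pow_card_le_prod {ι : Type*} [Fintype ι] {x : ι → ℝ} {c : ℝ}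
    (hx : ∀ i, 0 ≤ x i) (hc : 0 ≤ c) (hsum : ∑ i, x i = Fintype.card ι * c)
    (hprod : c ^ Fintype.card ι ≤ ∏ i, x i) (i : ι) : x i = c := by
  have : Nonempty ι := ⟨i⟩
  have hn : (Fintype.card ι : ℝ) ≠ 0 := by positivity
  have hmean : ∑ j, (Fintype.card ι : ℝ)⁻¹ * x j = c := by
    rw [← Finset.mul_sum, hsum, inv_mul_cancel_left₀ hn]
  have hw : ∑ _j : ι, (Fintype.card ι : ℝ)⁻¹ = 1 := by simp
  have hgeom : c ≤ ∏ j, x j ^ (Fintype.card ι : ℝ)⁻¹ := by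
    rw [Real.finsetProd_rpow _ _ fun j _ => hx j,
      ← Real.pow_rpow_inv_natCast hc (Fintype.card_ne_zero (α := ι))]
    exact Real.rpow_le_rpow (by positivity) hprod (by positivity)
  rw [← hmean]
  refine (Real.geom_mean_eq_arith_mean_weighted_iff_of_pos' Finset.univ _ x
    (fun _ _ => by positivity) hw fun j _ => hx j).1 (le_antisymm ?_ ?_) i (Finset.mem_univ i)
  · exact Real.geom_mean_le_arith_mean_weighted _ _ _ (fun _ _ => by positivity) hw fun j _ => hx j
  · rwa [hmean]

end GeneralLemmas

section AlgebraicUnits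

/-- The algebraic units of a field `K`: the nonzero algebraic integers of `K` whose inverse is again
an algebraic integer. -/
def algebraicUnits (K : Type*) [Field K] : Submonoid K :=
  (IsUnit.submonoid (integralClosure ℤ K)).map (integralClosure ℤ K).val

lemma isUnit_one_add_of_odd_pow_eq_one {A : Type*} [CommRing A] [IsDomain A] {z : A} {k : ℕ}
    (hk : Odd k) (hz : z ^ k = 1) (hz1 : z ≠ 1) : IsUnit (1 + z) := by
  have hodd : Odd (orderOf z) := hk.of_dvd_nat (orderOf_dvd_of_pow_eq_one hz)
  have hne : orderOf z ≠ 1 := mt orderOf_eq_one_iff.1 hz1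
  have h := (IsPrimitiveRoot.orderOf z).geom_sum_isUnit (j := 2) (by have := hodd.pos; omega)
    (Nat.coprime_two_left.2 hodd)
  simpa [Finset.sum_range_succ] using h

variable {K : Type*} [Field K]

lemma two_add_add_inv_mem_algebraicUnits {z : K} {k : ℕ} (hk : Odd k) (hz : z ^ k = 1)
    (hz1 : z ≠ 1) : 2 + (z + z⁻¹) ∈ algebraicUnits K := by
  let ζ : integralClosure ℤ K := ⟨z, IsIntegral.of_pow hk.pos (hz ▸ isIntegral_one)⟩
  have hζ : ζ ^ k = 1 := Subtype.ext hz
  have hunit : IsUnit ((1 + ζ) ^ 2 * ζ ^ (k - 1)) :=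
    ((isUnit_one_add_of_odd_pow_eq_one hk hζ fun h => hz1 (congrArg Subtype.val h)).pow 2).mul
      ((IsUnit.of_pow_eq_one hζ hk.pos.ne').pow _)
  have hz0 : z ≠ 0 := by
    rintro rfl
    simp [hk.pos.ne'] at hz
  have hinv : z ^ (k - 1) = z⁻¹ :=
    eq_inv_of_mul_eq_one_left (by rw [pow_sub_one_mul hk.pos.ne', hz])
  refine ⟨_, hunit, ?_⟩
  calc (1 + z) ^ 2 * z ^ (k - 1) = (1 + z) ^ 2 * z⁻¹ := by rw [hinv]
    _ = 2 + (z + z⁻¹) := by field_simp; ring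

lemma abs_eq_one_of_ratCast_mem_algebraicUnits [CharZero K] {q : ℚ}
    (h : (q : K) ∈ algebraicUnits K) : |q| = 1 := by
  obtain ⟨_, ⟨u, rfl⟩, hu⟩ := h
  have exists_intCast_eq (x : integralClosure ℤ K) {r : ℚ} (hx : (x : K) = r) :
      ∃ a : ℤ, a = r := by
    have hint : IsIntegral ℤ (algebraMap ℚ K r) := by
      rw [eq_ratCast, ← hx]
      exact x.2
    simpa using IsIntegrallyClosed.isIntegral_iff.1
      ((isIntegral_algebraMap_iff (algebraMap ℚ K).injective).1 hint)
  have hmul : (u : integralClosure ℤ K) * (↑u⁻¹ : integralClosure ℤ K) = (1 : K) :=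
    congrArg Subtype.val u.mul_inv
  have hinv : (↑(↑u⁻¹ : integralClosure ℤ K) : K) = (q⁻¹ : ℚ) := by
    rw [Rat.cast_inv, ← hu]
    exact eq_inv_of_mul_eq_one_right hmul
  obtain ⟨a, rfl⟩ := exists_intCast_eq u hu
  obtain ⟨b, hb⟩ := exists_intCast_eq _ hinv
  have hq : (a : ℚ) ≠ 0 := by
    rintro h
    simp [h] at hu
  have hab : a * b = 1 := by
    exact_mod_cast hb ▸ mul_inv_cancel₀ hq
  rcases Int.eq_one_or_neg_one_of_mul_eq_one hab with rfl | rfl <;> simp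

lemma exists_ne_zero_add_inv_eq [IsAlgClosed K] (a : K) :
    ∃ z : K, z ≠ 0 ∧ z + z⁻¹ = a := by
  have hdeg : (.X ^ 2 - .C a * .X + 1 : Polynomial K).degree = 2 := by compute_degree!
  obtain ⟨z, hz⟩ := IsAlgClosed.exists_root _ (hdeg.trans_ne two_ne_zero)
  have hz' : z ^ 2 - a * z + 1 = 0 := by simpa using hz
  have hz0 : z ≠ 0 := by
    rintro rfl
    simp at hz'
  refine ⟨z, hz0, ?_⟩
  field_simp
  linear_combination hz'

end AlgebraicUnits

section Arcs

variable {W : Type*} {G : SimpleGraph V} {H : SimpleGraph W}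

/-- The inverse of an arc. -/
def Arc.rev (e : Arc G) : Arc G := ⟨e.1.swap, e.2.symm⟩

lemma Arc.rev_involutive : Function.Involutive (Arc.rev (G := G)) := fun _ => rfl

lemma Arc.rev_ne (e : Arc G) : e.rev ≠ e := fun h => e.2.ne (congrArg (fun f => f.1.2) h)

lemma Arc.val_eq_swap_iff {e f : Arc G} : e.1 = f.1.swap ↔ f = e.rev := by
  rw [← Prod.swap_eq_iff_eq_swap, eq_comm, Subtype.ext_iff, Arc.rev]

/-- The bijection between arc sets induced by a graph isomorphism. -/
def Arc.congr (φ : G ≃g H) : Arc G ≃ Arc H :=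
  (φ.toEquiv.prodCongr φ.toEquiv).subtypeEquiv fun _ => φ.map_adj_iff.symm

lemma Arc.congr_val (φ : G ≃g H) (e : Arc G) : (Arc.congr φ e).1 = (φ e.1.1, φ e.1.2) := rfl

end Arcs

section TimeEvolution

variable [Fintype V] (G : SimpleGraph V)

lemma period_eq_orderOf : period G = orderOf (groverU G) := by
  obtain h | h := (orderOf (groverU G)).eq_zero_or_pos
  · have hempty : {k : ℕ | 0 < k ∧ groverU G ^ k = 1} = ∅ :=
      Set.eq_empty_of_forall_notMem fun k hk => orderOf_eq_zero_iff'.1 h k hk.1 hk.2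
    rw [period, hempty, Nat.sInf_empty, h]
  · have hleast : IsLeast {k : ℕ | 0 < k ∧ groverU G ^ k = 1} (orderOf (groverU G)) :=
      ⟨⟨h, pow_orderOf_eq_one _⟩, fun k hk => orderOf_le_of_pow_eq_one hk.1 hk.2⟩
    exact hleast.csInf_eq

variable {G}

lemma isKPeriodic_iff_orderOf_eq {k : ℕ} (hk : 0 < k) :
    IsKPeriodic G k ↔ orderOf (groverU G) = k := by
  rw [IsKPeriodic, period_eq_orderOf, and_iff_right_iff_imp]
  rintro rfl
  exact ⟨_, hk, pow_orderOf_eq_one _⟩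

lemma Arc.degree_snd_pos (e : Arc G) : 0 < G.degree e.1.2 :=
  (G.degree_pos_iff_exists_adj _).2 ⟨_, e.2.symm⟩

variable (G)

lemma sum_arc {M : Type*} [AddCommMonoid M] (g : V × V → M) :
    ∑ e : Arc G, g e.1 = ∑ u, ∑ v, if G.Adj u v then g (u, v) else 0 := by
  rw [← Fintype.sum_prod_type' fun u v => if G.Adj u v then g (u, v) else 0, ← Finset.sum_filter]
  exact (Finset.sum_subtype _ (by simp) g).symm

lemma sum_arc_snd {M : Type*} [AddCommMonoid M] (g : V → M) :
    ∑ e : Arc G, g e.1.2 = ∑ v, G.degree v • g v := by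
  rw [sum_arc G fun p => g p.2, Finset.sum_comm]
  refine Finset.sum_congr rfl fun v _ => ?_
  simp_rw [← Finset.sum_filter, Finset.sum_const, G.adj_comm _ v]
  rw [← G.neighborFinset_eq_filter, G.card_neighborFinset_eq_degree]

lemma card_arc : Fintype.card (Arc G) = ∑ v, G.degree v := by
  simpa only [smul_eq_mul, mul_one] using
    Fintype.card_eq_sum_ones.trans (sum_arc_snd G fun _ => 1)

/-- The `V × A` incidence matrix of the terminus map of the arcs. -/
noncomputable def terminusMatrix : Matrix V (Arc G) ℂ :=
  of fun v e => if e.1.2 = v then 1 else 0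

/-- The `V × A` incidence matrix of the origin map of the arcs. -/
noncomputable def originMatrix : Matrix V (Arc G) ℂ :=
  of fun v e => if e.1.1 = v then 1 else 0

/-- The permutation matrix of the arc reversal, which is the shift operator of the Grover walk. -/
noncomputable def flipMatrix : Matrix (Arc G) (Arc G) ℂ :=
  (Arc.rev_involutive (G := G)).toPerm.permMatrix ℂ

/-- The coin operator of the Grover walk: at each vertex of degree `d`, the Grover matrix
`(2 / d) J - 1` acts on the arcs ending there. -/
noncomputable def coinMatrix : Matrix (Arc G) (Arc G) ℂ :=
  2 • ((terminusMatrix G)ᵀ * diagonal (fun v => (G.degree v : ℂ)⁻¹) * terminusMatrix G) - 1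

lemma flipMatrix_mul_apply {n : Type*} (M : Matrix (Arc G) n ℂ) (e : Arc G) (i : n) :
    (flipMatrix G * M) e i = M e.rev i := by
  rw [flipMatrix, Equiv.Perm.permMatrix, PEquiv.toMatrix_toPEquiv_mul]
  rfl

lemma flipMatrix_mul_self : flipMatrix G * flipMatrix G = 1 := by
  have hinv : (Arc.rev_involutive (G := G)).toPerm * (Arc.rev_involutive (G := G)).toPerm = 1 :=
    Equiv.ext (Arc.rev_involutive (G := G))
  rw [flipMatrix, ← permMatrix_mul, hinv, permMatrix_one]

lemma trace_flipMatrix : (flipMatrix G).trace = 0 := by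
  have hfix : Function.fixedPoints (Arc.rev_involutive (G := G)).toPerm = ∅ :=
    Set.eq_empty_of_forall_notMem Arc.rev_ne
  rw [flipMatrix, trace_permutation, hfix, Set.ncard_empty, Nat.cast_zero]

lemma flipMatrix_mul_terminusMatrix_transpose :
    flipMatrix G * (terminusMatrix G)ᵀ = (originMatrix G)ᵀ := by
  ext e v
  rw [flipMatrix_mul_apply]
  rfl

lemma coinMatrix_apply (e f : Arc G) :
    coinMatrix G e f = (if e.1.2 = f.1.2 then 2 / (G.degree f.1.2 : ℂ) else 0) -
      if e = f then 1 else 0 := by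
  rw [coinMatrix, Matrix.sub_apply, Matrix.smul_apply, mul_apply]
  simp [mul_diagonal, terminusMatrix, one_apply, div_eq_mul_inv]

lemma groverU_eq_flipMatrix_mul_coinMatrix : groverU G = flipMatrix G * coinMatrix G := by
  ext e f
  have hval : e.1 = (f.1.2, f.1.1) ↔ e.rev = f := Arc.val_eq_swap_iff.trans eq_comm
  rw [flipMatrix_mul_apply, coinMatrix_apply, groverU]
  simp only [hval]
  by_cases h : f.1.2 = e.1.1
  · rw [if_pos h, if_pos (show e.rev.1.2 = f.1.2 from h.symm)]
    split_ifs <;> simp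
  · have hne : e.rev ≠ f := fun hef => h (hef ▸ rfl)
    rw [if_neg h, if_neg (show e.rev.1.2 ≠ f.1.2 from Ne.symm h), if_neg hne, sub_zero]

lemma terminusMatrix_mul_transpose :
    terminusMatrix G * (terminusMatrix G)ᵀ = G.degMatrix ℂ := by
  ext u v
  refine (sum_arc_snd G fun w => (if w = u then 1 else 0) * (if w = v then (1 : ℂ) else 0)).trans ?_
  rcases eq_or_ne u v with rfl | huv
  · simp [SimpleGraph.degMatrix]
  · simp [SimpleGraph.degMatrix, huv, huv.symm]

lemma terminusMatrix_mul_originMatrix_transpose :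
    terminusMatrix G * (originMatrix G)ᵀ = G.adjMatrix ℂ := by
  ext u v
  refine (sum_arc G fun p => (if p.2 = u then 1 else 0) * (if p.1 = v then (1 : ℂ) else 0)).trans ?_
  rw [Fintype.sum_eq_single v (by simp +contextual),
    Fintype.sum_eq_single u (by simp +contextual)]
  simp [G.adj_comm v]

lemma coinMatrix_mul_terminusMatrix_transpose :
    coinMatrix G * (terminusMatrix G)ᵀ = (terminusMatrix G)ᵀ := by
  have hdeg : (terminusMatrix G)ᵀ * diagonal (fun v => (G.degree v : ℂ)⁻¹) * G.degMatrix ℂ =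
      (terminusMatrix G)ᵀ := by
    ext e v
    have hd : (G.degree e.1.2 : ℂ) ≠ 0 := Nat.cast_ne_zero.2 e.degree_snd_pos.ne'
    rw [SimpleGraph.degMatrix, mul_diagonal, mul_diagonal, transpose_apply, terminusMatrix,
      of_apply]
    split_ifs with h
    · rw [← h, inv_mul_cancel_right₀ hd]
    · simp
  rw [coinMatrix, Matrix.sub_mul, Matrix.smul_mul, Matrix.mul_assoc _ (terminusMatrix G),
    terminusMatrix_mul_transpose, hdeg, Matrix.one_mul, two_smul, add_sub_cancel_right]

lemma coinMatrix_mul_self : coinMatrix G * coinMatrix G = 1 := by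
  nth_rw 2 [coinMatrix]
  rw [Matrix.mul_sub, Matrix.mul_smul, ← Matrix.mul_assoc, ← Matrix.mul_assoc,
    coinMatrix_mul_terminusMatrix_transpose, Matrix.mul_one, coinMatrix, sub_sub_cancel]

lemma trace_coinMatrix (hpos : ∀ v, 0 < G.degree v) :
    (coinMatrix G).trace = 2 * Fintype.card V - ∑ v, (G.degree v : ℂ) := by
  have hdeg : diagonal (fun v => (G.degree v : ℂ)⁻¹) * G.degMatrix ℂ = 1 := by
    rw [SimpleGraph.degMatrix, diagonal_mul_diagonal, ← diagonal_one]
    congr! with v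
    exact inv_mul_cancel₀ (Nat.cast_ne_zero.2 (hpos v).ne')
  rw [coinMatrix, trace_sub, trace_smul, Matrix.mul_assoc, trace_mul_comm, Matrix.mul_assoc,
    terminusMatrix_mul_transpose, hdeg, trace_one, trace_one, card_arc, two_nsmul, two_mul,
    Nat.cast_sum]

variable {G} in
lemma sum_degree_eq_two_mul_card (hpos : ∀ v, 0 < G.degree v) {k : ℕ} (hk : Odd k)
    (h : groverU G ^ k = 1) : ∑ v, G.degree v = 2 * Fintype.card V := by
  rw [groverU_eq_flipMatrix_mul_coinMatrix] at h
  have htrace := trace_eq_of_isConj <|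
    isConj_of_odd_pow_mul_eq_one (flipMatrix_mul_self G) (coinMatrix_mul_self G) hk h
  rw [trace_flipMatrix, trace_coinMatrix G hpos, eq_comm, sub_eq_zero] at htrace
  exact_mod_cast htrace.symm

lemma groverU_mul_terminusMatrix_transpose :
    groverU G * (terminusMatrix G)ᵀ = (originMatrix G)ᵀ := by
  rw [groverU_eq_flipMatrix_mul_coinMatrix, Matrix.mul_assoc,
    coinMatrix_mul_terminusMatrix_transpose, flipMatrix_mul_terminusMatrix_transpose]

lemma transition_eq :
    transition G = diagonal (fun v => (G.degree v : ℝ)⁻¹) * G.adjMatrix ℝ := by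
  ext u v
  rw [transition, diagonal_mul, SimpleGraph.adjMatrix_apply, mul_boole, one_div]

lemma groverU_mul_originMatrix_transpose :
    groverU G * (originMatrix G)ᵀ =
      2 • ((originMatrix G)ᵀ * (transition G).map (algebraMap ℝ ℂ)) - (terminusMatrix G)ᵀ := by
  have hflip : flipMatrix G * (originMatrix G)ᵀ = (terminusMatrix G)ᵀ := by
    rw [← flipMatrix_mul_terminusMatrix_transpose, ← Matrix.mul_assoc, flipMatrix_mul_self,
      Matrix.one_mul]
  have htransition : diagonal (fun v => (G.degree v : ℂ)⁻¹) * G.adjMatrix ℂ =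
      (transition G).map (algebraMap ℝ ℂ) := by
    ext u v
    rw [diagonal_mul]
    by_cases h : G.Adj u v <;> simp [transition, h]
  rw [groverU_eq_flipMatrix_mul_coinMatrix, Matrix.mul_assoc, coinMatrix, Matrix.sub_mul,
    Matrix.smul_mul, Matrix.mul_assoc _ (terminusMatrix G),
    terminusMatrix_mul_originMatrix_transpose, Matrix.mul_assoc, htransition, Matrix.one_mul,
    Matrix.mul_sub, Matrix.mul_smul, ← Matrix.mul_assoc, flipMatrix_mul_terminusMatrix_transpose,
    hflip]

variable {G}

lemma pow_eq_one_of_transition_eigenvector (hpos : ∀ v, 0 < G.degree v) {k : ℕ}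
    (h : groverU G ^ k = 1) {x : V → ℝ} (hx : x ≠ 0) {μ : ℝ} (hμ : transition G *ᵥ x = μ • x)
    {z : ℂ} (hz : z ≠ 0) (hzμ : z + z⁻¹ = 2 * μ) : z ^ k = 1 := by
  let g : V → ℂ := algebraMap ℝ ℂ ∘ x
  set a := (terminusMatrix G)ᵀ *ᵥ g with ha
  set b := (originMatrix G)ᵀ *ᵥ g with hb
  have hUa : groverU G *ᵥ a = b := by
    rw [ha, mulVec_mulVec, groverU_mul_terminusMatrix_transpose]
  have hUb : groverU G *ᵥ b = (z + z⁻¹) • b - a := by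
    have hTg : (transition G).map (algebraMap ℝ ℂ) *ᵥ g = (μ : ℂ) • g := by
      ext v
      rw [← RingHom.map_mulVec, hμ]
      simp [g]
    rw [hb, mulVec_mulVec, groverU_mul_originMatrix_transpose, sub_mulVec, smul_mulVec,
      ← mulVec_mulVec, hTg, mulVec_smul, hzμ, mul_smul, two_smul, two_smul]
  have ha0 : a ≠ 0 := by
    obtain ⟨v, hv⟩ := Function.ne_iff.1 hx
    obtain ⟨w, hvw⟩ := (G.degree_pos_iff_exists_adj v).1 (hpos v)
    refine Function.ne_iff.2 ⟨⟨(w, v), hvw.symm⟩, ?_⟩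
    simpa [ha, mulVec, dotProduct, terminusMatrix, g] using hv
  obtain hw | hw := eq_or_ne (b - z⁻¹ • a) 0
  · have hinv := pow_eq_one_of_mulVec_eq_smul h ha0 (hUa.trans (sub_eq_zero.1 hw))
    rwa [inv_pow, inv_eq_one] at hinv
  · refine pow_eq_one_of_mulVec_eq_smul h hw ?_
    rw [mulVec_sub, mulVec_smul, hUa, hUb, smul_sub, smul_smul, mul_inv_cancel₀ hz]
    module

end TimeEvolution

section NormalizedAdjacency

variable [Fintype V] (G : SimpleGraph V)

/-- The symmetrically normalized adjacency matrix `D^{-1/2} A D^{-1/2}` of a graph. It is symmetric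
and, in the absence of isolated vertices, similar to the transition matrix `D⁻¹ A`. -/
noncomputable def normalizedAdj : Matrix V V ℝ :=
  diagonal (fun v => (√(G.degree v))⁻¹) * G.adjMatrix ℝ * diagonal fun v => (√(G.degree v))⁻¹

lemma isHermitian_normalizedAdj : (normalizedAdj G).IsHermitian := by
  have h := isHermitian_conjTranspose_mul_mul (diagonal fun v => (√(G.degree v))⁻¹)
    (G.isHermitian_adjMatrix ℝ)
  rwa [diagonal_conjTranspose, star_trivial] at h

lemma transition_mul_diagonal_eq :
    transition G * diagonal (fun v => (√(G.degree v))⁻¹) =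
      diagonal (fun v => (√(G.degree v))⁻¹) * normalizedAdj G := by
  have hsqrt : diagonal (fun v => (G.degree v : ℝ)⁻¹) =
      diagonal (fun v => (√(G.degree v))⁻¹) * diagonal (fun v => (√(G.degree v))⁻¹) := by
    simp_rw [diagonal_mul_diagonal, ← mul_inv, Real.mul_self_sqrt (Nat.cast_nonneg _)]
  rw [transition_eq, hsqrt, normalizedAdj]
  simp only [Matrix.mul_assoc]

variable {G}

lemma transition_mulVec_of_normalizedAdj_mulVec {x : V → ℝ} {μ : ℝ}
    (h : normalizedAdj G *ᵥ x = μ • x) :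
    transition G *ᵥ (diagonal (fun v => (√(G.degree v))⁻¹) *ᵥ x) =
      μ • diagonal (fun v => (√(G.degree v))⁻¹) *ᵥ x := by
  rw [mulVec_mulVec, transition_mul_diagonal_eq, ← mulVec_mulVec, h, mulVec_smul]

lemma eq_of_transition_mulVec_eq_self (hconn : G.Preconnected) {y : V → ℝ}
    (h : transition G *ᵥ y = y) (u v : V) : y u = y v := by
  have hadj : G.degMatrix ℝ * transition G = G.adjMatrix ℝ := by
    ext u v
    rw [SimpleGraph.degMatrix, diagonal_mul, transition, SimpleGraph.adjMatrix_apply]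
    split_ifs with huv
    · have hd : (G.degree u : ℝ) ≠ 0 :=
        Nat.cast_ne_zero.2 ((G.degree_pos_iff_exists_adj u).2 ⟨v, huv⟩).ne'
      exact mul_one_div_cancel hd
    · exact mul_zero _
  refine G.lapMatrix_mulVec_eq_zero_iff_forall_reachable.1 ?_ u v (hconn u v)
  rw [SimpleGraph.lapMatrix, sub_mulVec, ← hadj, ← mulVec_mulVec, h, sub_self]

lemma subsingleton_eigenvalues_normalizedAdj_eq_one (hconn : G.Connected)
    (hpos : ∀ v, 0 < G.degree v) :
    {i | (isHermitian_normalizedAdj G).eigenvalues i = 1}.Subsingleton := by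
  obtain ⟨v₀⟩ := hconn.nonempty
  refine subsingleton_eigenvalues_eq _ (v := fun v => √(G.degree v)) fun x hx => ?_
  have hT := transition_mulVec_of_normalizedAdj_mulVec hx
  rw [one_smul] at hT
  refine ⟨(diagonal (fun v => (√(G.degree v))⁻¹) *ᵥ x) v₀, funext fun v => ?_⟩
  have hd : √(G.degree v : ℝ) ≠ 0 := (Real.sqrt_pos.2 (Nat.cast_pos.2 (hpos v))).ne'
  have hconst := eq_of_transition_mulVec_eq_self hconn.preconnected hT v v₀
  rwa [mulVec_diagonal, inv_mul_eq_iff_eq_mul₀ hd, mul_comm] at hconst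

lemma two_add_two_mul_eigenvalue_mem_algebraicUnits (hpos : ∀ v, 0 < G.degree v) {k : ℕ}
    (hk : Odd k) (h : groverU G ^ k = 1) {i : V}
    (hi : (isHermitian_normalizedAdj G).eigenvalues i ≠ 1) :
    (2 + 2 * (isHermitian_normalizedAdj G).eigenvalues i : ℂ) ∈ algebraicUnits ℂ := by
  set hN := isHermitian_normalizedAdj G
  obtain ⟨z, hz0, hz⟩ := exists_ne_zero_add_inv_eq (2 * hN.eigenvalues i : ℂ)
  have hz1 : z ≠ 1 := by
    rintro rfl
    refine hi (Complex.ofReal_injective ?_)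
    rw [Complex.ofReal_one]
    linear_combination -(1 / 2) * hz
  have hx : diagonal (fun v => (√(G.degree v))⁻¹) *ᵥ (hN.eigenvectorBasis i).ofLp ≠ 0 := by
    intro h0
    refine hN.eigenvectorBasis.orthonormal.ne_zero i (PiLp.ext fun v => ?_)
    have hd : √(G.degree v : ℝ) ≠ 0 := (Real.sqrt_pos.2 (Nat.cast_pos.2 (hpos v))).ne'
    simpa [mulVec_diagonal, hd] using congrFun h0 v
  have hzk := pow_eq_one_of_transition_eigenvector hpos h hx
    (transition_mulVec_of_normalizedAdj_mulVec (hN.mulVec_eigenvectorBasis i)) hz0 hz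
  exact hz ▸ two_add_add_inv_mem_algebraicUnits hk hzk hz1

end NormalizedAdjacency

section SignlessLaplacian

variable [Fintype V] (G : SimpleGraph V)

/-- The signless Laplacian `D + A` of a graph. -/
noncomputable def signlessLapMatrix (R : Type*) [AddMonoidWithOne R] : Matrix V V R :=
  G.degMatrix R + G.adjMatrix R

lemma incMatrix_mul_transpose_eq_signlessLapMatrix (R : Type*) [Semiring R] :
    G.incMatrix R * (G.incMatrix R)ᵀ = signlessLapMatrix G R := by
  rw [SimpleGraph.incMatrix_mul_transpose]
  ext u v
  rcases eq_or_ne u v with rfl | huv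
  · simp [signlessLapMatrix, SimpleGraph.degMatrix]
  · simp [signlessLapMatrix, SimpleGraph.degMatrix, huv, SimpleGraph.adjMatrix_apply]

variable {G}

lemma four_dvd_det_signlessLapMatrix [Nonempty V] (h : ∑ v, G.degree v = 2 * Fintype.card V) :
    4 ∣ (signlessLapMatrix G ℤ).det := by
  have hcard : Fintype.card V = Fintype.card G.edgeSet := by
    have hsum := G.sum_degrees_eq_twice_card_edges
    rw [SimpleGraph.edgeFinset_card] at hsum
    omega
  let ε := Fintype.equivOfCardEq hcard
  let B : Matrix V V ℤ := (G.incMatrix ℤ).submatrix id fun v => (ε v : Sym2 V)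
  have hdet : 2 ∣ B.det := dvd_det_of_forall_dvd_sum_col fun v => by
    simp [B, SimpleGraph.sum_incMatrix_apply_of_mem_edgeSet G (ε v).2]
  have hB : B * Bᵀ = signlessLapMatrix G ℤ := by
    rw [← incMatrix_mul_transpose_eq_signlessLapMatrix]
    ext u v
    refine Fintype.sum_of_injective (fun w => (ε w : Sym2 V))
      (Subtype.val_injective.comp ε.injective) _ _ (fun e he => ?_) fun _ => rfl
    have hinc : e ∉ G.incidenceSet u := fun hu => he ⟨ε.symm ⟨e, hu.1⟩, by simp⟩
    exact mul_eq_zero_of_left (G.incMatrix_of_notMem_incidenceSet hinc) _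
  rw [← hB, det_mul, det_transpose]
  exact mul_dvd_mul hdet hdet

lemma prod_degree_mul_det_one_add_normalizedAdj (hpos : ∀ v, 0 < G.degree v) :
    (∏ v, (G.degree v : ℝ)) * (1 + normalizedAdj G).det = (signlessLapMatrix G ℝ).det := by
  set R : Matrix V V ℝ := diagonal fun v => √(G.degree v) with hR
  set R' : Matrix V V ℝ := diagonal fun v => (√(G.degree v))⁻¹ with hR'
  have hd (v : V) : √(G.degree v : ℝ) ≠ 0 := (Real.sqrt_pos.2 (Nat.cast_pos.2 (hpos v))).ne'
  have hmulinv : R * R' = 1 := by simp [hR, hR', diagonal_mul_diagonal, hd]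
  have hinvmul : R' * R = 1 := by simp [hR, hR', diagonal_mul_diagonal, hd]
  have hsq : R * R = G.degMatrix ℝ := by
    simp [hR, diagonal_mul_diagonal, SimpleGraph.degMatrix]
  have hQ : R * (1 + normalizedAdj G) * R = signlessLapMatrix G ℝ := by
    rw [mul_add, mul_one, add_mul, hsq, signlessLapMatrix, normalizedAdj]
    congr 1
    calc R * (R' * G.adjMatrix ℝ * R') * R = R * R' * G.adjMatrix ℝ * (R' * R) := by
          simp only [mul_assoc]
      _ = G.adjMatrix ℝ := by rw [hmulinv, hinvmul, one_mul, mul_one]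
  rw [← hQ, det_mul, det_mul, mul_right_comm, ← det_mul, hsq, SimpleGraph.degMatrix, det_diagonal]

lemma intCast_det_signlessLapMatrix (hpos : ∀ v, 0 < G.degree v) :
    ((signlessLapMatrix G ℤ).det : ℂ) =
      (∏ v, (G.degree v : ℂ)) * ∏ i, (1 + ((isHermitian_normalizedAdj G).eigenvalues i : ℂ)) := by
  have hmap : (Int.castRingHom ℝ).mapMatrix (signlessLapMatrix G ℤ) = signlessLapMatrix G ℝ := by
    ext u v
    simp [signlessLapMatrix, SimpleGraph.degMatrix, diagonal_apply, SimpleGraph.adjMatrix_apply,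
      apply_ite (Int.cast : ℤ → ℝ)]
  have hdet : ((signlessLapMatrix G ℤ).det : ℝ) = (signlessLapMatrix G ℝ).det := by
    rw [← hmap, ← RingHom.map_det, eq_intCast]
  rw [← prod_degree_mul_det_one_add_normalizedAdj hpos,
    det_one_add_eq_prod_eigenvalues (isHermitian_normalizedAdj G)] at hdet
  simpa using congrArg Complex.ofReal hdet

lemma two_pow_card_mul_abs_det_signlessLapMatrix (hpos : ∀ v, 0 < G.degree v) {k : ℕ} (hk : Odd k)
    (h : groverU G ^ k = 1) :
    2 ^ Fintype.card V * |(signlessLapMatrix G ℤ).det| =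
      4 ^ {i | (isHermitian_normalizedAdj G).eigenvalues i = 1}.ncard * ∏ v, (G.degree v : ℤ) := by
  have hdet := intCast_det_signlessLapMatrix hpos
  set ev := (isHermitian_normalizedAdj G).eigenvalues
  set D := (signlessLapMatrix G ℤ).det
  have hd : 0 < ∏ v, (G.degree v : ℤ) := Finset.prod_pos fun v _ => mod_cast hpos v
  set d := ∏ v, (G.degree v : ℤ) with hd_def
  set s := {i | ev i = 1}.ncard with hs
  have hsplit : ∏ i, (2 + 2 * ev i : ℂ) = 4 ^ s * ∏ i with ev i ≠ 1, (2 + 2 * ev i : ℂ) := by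
    have hone : ∏ i with ev i = 1, (2 + 2 * ev i : ℂ) = 4 ^ s := by
      rw [hs, Set.ncard_eq_toFinset_card', Set.toFinset_ofPred]
      refine Finset.prod_eq_pow_card fun i hi => ?_
      rw [(Finset.mem_filter.1 hi).2]
      norm_num
    rw [← Finset.prod_filter_mul_prod_filter_not Finset.univ fun i => ev i = 1, hone]
  have hdet' : (2 ^ Fintype.card V * D : ℂ) =
      4 ^ s * d * ∏ i with ev i ≠ 1, (2 + 2 * ev i : ℂ) := by
    rw [mul_right_comm, ← hsplit, hdet, mul_left_comm, mul_comm, ← Finset.card_univ,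
      ← Finset.prod_const, ← Finset.prod_mul_distrib]
    simp [hd_def, mul_add]
  have hne : (4 ^ s * d : ℂ) ≠ 0 := by exact_mod_cast (mul_pos (pow_pos four_pos s) hd).ne'
  have hmem : ((2 ^ Fintype.card V * D / (4 ^ s * d) : ℚ) : ℂ) ∈
      algebraicUnits ℂ := by
    push_cast
    rw [hdet', mul_div_cancel_left₀ _ hne]
    exact prod_mem fun i hi =>
      two_add_two_mul_eigenvalue_mem_algebraicUnits hpos hk h (Finset.mem_filter.1 hi).2
  have habs := abs_eq_one_of_ratCast_mem_algebraicUnits hmem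
  rw [abs_div, abs_mul, div_eq_one_iff_eq (by positivity), abs_of_pos (by positivity),
    abs_of_pos (by positivity : (0 : ℚ) < 4 ^ s * d)] at habs
  exact_mod_cast habs

lemma two_pow_card_le_prod_degree (hconn : G.Connected) (hpos : ∀ v, 0 < G.degree v) {k : ℕ}
    (hk : Odd k) (h : groverU G ^ k = 1) : 2 ^ Fintype.card V ≤ ∏ v, G.degree v := by
  have := hconn.nonempty
  have hd : 0 < ∏ v, (G.degree v : ℤ) := Finset.prod_pos fun v _ => mod_cast hpos v
  have heq := two_pow_card_mul_abs_det_signlessLapMatrix hpos hk h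
  set s := {i | (isHermitian_normalizedAdj G).eigenvalues i = 1}.ncard
  have hs : s ≤ 1 := Set.ncard_le_one_iff_subsingleton.2
    (subsingleton_eigenvalues_normalizedAdj_eq_one hconn hpos)
  have hdet : 4 ≤ |(signlessLapMatrix G ℤ).det| := by
    refine Int.le_of_dvd ?_ <| (dvd_abs _ _).2 <|
      four_dvd_det_signlessLapMatrix (sum_degree_eq_two_mul_card hpos hk h)
    refine abs_pos.2 fun h0 => (mul_pos (pow_pos four_pos s) hd).ne' ?_
    rw [← heq, h0, abs_zero, mul_zero]
  zify
  refine le_of_mul_le_mul_left ?_ (show (0 : ℤ) < 4 by norm_num)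
  calc 4 * (2 : ℤ) ^ Fintype.card V
    _ ≤ |(signlessLapMatrix G ℤ).det| * 2 ^ Fintype.card V := by gcongr
    _ = 4 ^ s * ∏ v, (G.degree v : ℤ) := by rw [mul_comm, heq]
    _ ≤ 4 * ∏ v, (G.degree v : ℤ) := by
      gcongr
      exact (pow_le_pow_right₀ (by norm_num) hs).trans_eq (pow_one 4)

lemma nontrivial_of_groverU_ne_one (h : groverU G ≠ 1) : Nontrivial V := by
  by_contra hV
  have := not_nontrivial_iff_subsingleton.1 hV
  have : IsEmpty (Arc G) := ⟨fun e => e.2.ne (Subsingleton.elim _ _)⟩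
  exact h (Subsingleton.elim _ _)

lemma isRegularOfDegree_two_of_groverU_pow_eq_one (hconn : G.Connected)
    (hpos : ∀ v, 0 < G.degree v) {k : ℕ} (hk : Odd k) (h : groverU G ^ k = 1) :
    G.IsRegularOfDegree 2 := fun v => by
  have hsum : ∑ v, (G.degree v : ℝ) = Fintype.card V * 2 := by
    exact_mod_cast (sum_degree_eq_two_mul_card hpos hk h).trans (mul_comm _ _)
  have hprod : (2 : ℝ) ^ Fintype.card V ≤ ∏ v, (G.degree v : ℝ) := by
    exact_mod_cast two_pow_card_le_prod_degree hconn hpos hk h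
  exact_mod_cast eq_of_sum_eq_of_pow_card_le_prod (fun _ => Nat.cast_nonneg _) zero_le_two hsum
    hprod v

end SignlessLaplacian

section CycleGraph

variable (n : ℕ)

lemma isRegularOfDegree_cycleGraph [(SimpleGraph.cycleGraph (n + 3)).LocallyFinite] :
    (SimpleGraph.cycleGraph (n + 3)).IsRegularOfDegree 2 := fun v =>
  by convert SimpleGraph.cycleGraph_degree_three_le (v := v)

open Fin.CommRing Fin.NatCast

/-- The rotation of the arcs of a cycle graph, moving each arc one step further in its own
direction. -/
def arcRotation : Equiv.Perm (Arc (SimpleGraph.cycleGraph (n + 3))) where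
  toFun e := ⟨(e.1.2, e.1.2 + (e.1.2 - e.1.1)), by
    have := SimpleGraph.cycleGraph_adj.1 e.2
    simpa [SimpleGraph.cycleGraph_adj] using this⟩
  invFun e := ⟨(e.1.1 + (e.1.1 - e.1.2), e.1.1), by
    have := SimpleGraph.cycleGraph_adj.1 e.2
    simpa [SimpleGraph.cycleGraph_adj] using this⟩
  left_inv e := by simp
  right_inv e := by simp

variable {n}

lemma arcRotation_apply (e : Arc (SimpleGraph.cycleGraph (n + 3))) :
    (arcRotation n e).1 = (e.1.2, e.1.2 + (e.1.2 - e.1.1)) := rfl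

lemma arcRotation_pow_apply (j : ℕ) (e : Arc (SimpleGraph.cycleGraph (n + 3))) :
    ((arcRotation n ^ j) e).1 =
      (e.1.1 + j * (e.1.2 - e.1.1), e.1.2 + j * (e.1.2 - e.1.1)) := by
  induction j with
  | zero => simp
  | succ j ih =>
    rw [pow_succ', Equiv.Perm.mul_apply, arcRotation_apply, ih]
    push_cast
    ext1 <;> ring

lemma orderOf_arcRotation : orderOf (arcRotation n) = n + 3 := by
  refine eq_of_forall_dvd fun j => ?_
  rw [orderOf_dvd_iff_pow_eq_one, ← Fin.natCast_eq_zero]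
  constructor
  · intro h
    have hpow := arcRotation_pow_apply (n := n) j ⟨(0, 1), SimpleGraph.cycleGraph_adj.2 (by simp)⟩
    simpa [h] using (congrArg Prod.fst hpow).symm
  · intro h
    ext e : 2
    simp [arcRotation_pow_apply, h]

lemma eq_arcRotation_iff {e f : Arc (SimpleGraph.cycleGraph (n + 3))} :
    e = arcRotation n f ↔ f.1.2 = e.1.1 ∧ e.1 ≠ f.1.swap := by
  obtain ⟨⟨a, b⟩, he⟩ := e
  obtain ⟨⟨c, d⟩, hf⟩ := f
  have htwo : (2 : Fin (n + 3)) ≠ 0 := by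
    rw [ne_eq, Fin.ext_iff, Fin.val_two]
    exact two_ne_zero
  rw [SimpleGraph.cycleGraph_adj] at he hf
  rw [Subtype.ext_iff, arcRotation_apply]
  simp only [Prod.mk.injEq, Prod.swap_prod_mk, ne_eq, not_and] at he hf ⊢
  grind

variable [Fintype V] {G : SimpleGraph V}

lemma groverU_apply_of_isRegularOfDegree_two (h : G.IsRegularOfDegree 2) (e f : Arc G) :
    groverU G e f = if f.1.2 = e.1.1 ∧ e.1 ≠ f.1.swap then 1 else 0 := by
  rw [groverU, h f.1.2, Nat.cast_two, div_self two_ne_zero, sub_self, ite_and, ite_not]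
  rfl

lemma groverU_eq_permMatrixHom_of_iso_cycleGraph (φ : G ≃g SimpleGraph.cycleGraph (n + 3)) :
    groverU G = permMatrixHom ((Arc.congr φ).symm.permCongr (arcRotation n)) := by
  have hreg : G.IsRegularOfDegree 2 := fun v =>
    (φ.degree_eq v).symm.trans (isRegularOfDegree_cycleGraph n (φ v))
  ext e f
  have hmem : f ∈ ((Arc.congr φ).symm.permCongr (arcRotation n))⁻¹.toPEquiv e ↔
      f.1.2 = e.1.1 ∧ e.1 ≠ f.1.swap := by
    rw [Equiv.toPEquiv_apply, Option.mem_some_iff, Equiv.Perm.inv_eq_iff_eq, Equiv.permCongr_apply,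
      Equiv.symm_symm, Equiv.eq_symm_apply, eq_arcRotation_iff]
    simp [Arc.congr_val, Prod.ext_iff]
  simp only [permMatrixHom_apply, PEquiv.toMatrix_apply,
    groverU_apply_of_isRegularOfDegree_two hreg, hmem]

lemma orderOf_groverU_of_iso_cycleGraph {k : ℕ} (hk : 3 ≤ k) (φ : G ≃g SimpleGraph.cycleGraph k) :
    orderOf (groverU G) = k := by
  obtain ⟨n, rfl⟩ := Nat.exists_eq_add_of_le' hk
  rw [groverU_eq_permMatrixHom_of_iso_cycleGraph φ, orderOf_injective _ (permMatrixHom_injective ℂ)]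
  exact (MulEquiv.orderOf_eq (Arc.congr φ).symm.permCongrHom _).trans orderOf_arcRotation

end CycleGraph

section RegularOfDegreeTwo

open SimpleGraph

lemma adj_apply_iff_of_degree_eq {W : Type*} {G : SimpleGraph V} {H : SimpleGraph W}
    (f : H →g G) (hf : Function.Injective f) {a b : W} [Fintype (H.neighborSet a)]
    [Fintype (G.neighborSet (f a))] (hdeg : G.degree (f a) = H.degree a) :
    G.Adj (f a) (f b) ↔ H.Adj a b := by
  have himage : (H.neighborFinset a).image f = G.neighborFinset (f a) := by
    refine Finset.eq_of_subset_of_card_le (Finset.image_subset_iff.2 fun c hc => ?_) ?_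
    · rw [mem_neighborFinset] at hc ⊢
      exact f.map_adj hc
    · rw [Finset.card_image_of_injective _ hf, card_neighborFinset_eq_degree,
        card_neighborFinset_eq_degree, hdeg]
  rw [← mem_neighborFinset, ← himage, hf.mem_finset_image, mem_neighborFinset]

variable [Fintype V] {G : SimpleGraph V}

lemma exists_isHamiltonianCycle_of_isRegularOfDegree_two (hconn : G.Connected)
    (h : G.IsRegularOfDegree 2) : ∃ (v : V) (p : G.Walk v v), p.IsHamiltonianCycle := by
  have hcycles : G.IsCycles := fun v _ => by
    rw [Set.ncard_eq_toFinset_card', ← h v, ← card_neighborFinset_eq_degree, neighborFinset]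
  obtain ⟨v⟩ := hconn.nonempty
  have hne : (G.neighborSet v).Nonempty :=
    (G.degree_pos_iff_exists_adj v).1 (h v ▸ two_pos)
  obtain ⟨p, hp, hverts⟩ := hcycles.exists_cycle_toSubgraph_verts_eq_connectedComponentSupp
    (c := G.connectedComponentMk v) rfl hne
  refine ⟨v, p, hp, hp.isPath_tail.isHamiltonian_of_mem fun w => ?_⟩
  have hw : w ∈ p.support := by
    rw [← Walk.mem_verts_toSubgraph, hverts]
    exact ConnectedComponent.sound (hconn.preconnected w v)
  rw [← Walk.cons_tail_support, List.mem_cons] at hw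
  rw [Walk.support_tail_of_not_nil p hp.not_nil]
  rcases hw with rfl | hw
  · exact Walk.end_mem_tail_support hp.not_nil
  · exact hw

lemma nonempty_iso_cycleGraph_of_isHamiltonianCycle (h : G.IsRegularOfDegree 2) {v : V}
    {p : G.Walk v v} (hp : p.IsHamiltonianCycle) :
    Nonempty (G ≃g cycleGraph (Fintype.card V)) := by
  have h3 : 3 ≤ Fintype.card V := hp.length_eq ▸ hp.isCycle.three_le_length
  obtain ⟨f⟩ := (cycleGraph_isContained_iff (G := G) h3).2 ⟨v, p, hp.isCycle, hp.length_eq⟩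
  have hbij : Function.Bijective f :=
    (Fintype.bijective_iff_injective_and_card f).2 ⟨f.injective, Fintype.card_fin _⟩
  have hreg : (cycleGraph (Fintype.card V)).IsRegularOfDegree 2 := by
    obtain ⟨n, hn⟩ := Nat.exists_eq_add_of_le' h3
    exact hn ▸ isRegularOfDegree_cycleGraph n
  have hadj {a b} := adj_apply_iff_of_degree_eq f.toHom f.injective (b := b)
    ((h (f a)).trans (hreg a).symm)
  exact ⟨.symm ⟨.ofBijective f hbij, hadj⟩⟩

end RegularOfDegreeTwo

/-- For an odd integer `k ≥ 3`, a finite simple connected graph `G` is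
`k`-periodic if and only if `G` is isomorphic to the cycle graph `C_k`. -/
theorem odd_kPeriodic_iff_isCycle {V : Type*} [Fintype V] (G : SimpleGraph V)
    (hconn : G.Connected) (k : ℕ) (hk3 : 3 ≤ k) (hkodd : Odd k) :
    IsKPeriodic G k ↔ Nonempty (G ≃g SimpleGraph.cycleGraph k) := by
  rw [isKPeriodic_iff_orderOf_eq hkodd.pos]
  refine ⟨fun h => ?_, fun ⟨φ⟩ => orderOf_groverU_of_iso_cycleGraph hk3 φ⟩
  have hpow : groverU G ^ k = 1 := h ▸ pow_orderOf_eq_one _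
  have : Nontrivial V := nontrivial_of_groverU_ne_one fun h1 => by
    rw [h1, orderOf_one] at h
    omega
  have hreg : G.IsRegularOfDegree 2 := isRegularOfDegree_two_of_groverU_pow_eq_one hconn
    (fun v => hconn.preconnected.degree_pos_of_nontrivial v) hkodd hpow
  obtain ⟨v, p, hp⟩ := exists_isHamiltonianCycle_of_isRegularOfDegree_two hconn hreg
  obtain ⟨φ⟩ := nonempty_iso_cycleGraph_of_isHamiltonianCycle hreg hp
  have hcard : Fintype.card V = k :=
    (orderOf_groverU_of_iso_cycleGraph (hp.length_eq ▸ hp.isCycle.three_le_length) φ).symm.trans h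
  exact ⟨hcard ▸ φ⟩

end GroverPaper
end

section
/- Let k ≥ 3 be odd and let G ∈ 𝒪(k) have unique cycle vertices u_0, u_1, …, u_{k−1}. If G is periodic, then either (i) deg(u_0)=deg(u_1)=…=deg(u_{k−1})=2, or (ii) there exists a unique index 0 ≤ i ≤ k−1 with deg(u_i)=4 and deg(u_l)=2 for all l ≠ i. -/
open Matrix

attribute [local instance] Classical.propDecidable

namespace GroverPaper

variable {V : Type*}

/-!
Pulling vertex functions back along the origins of arcs intertwines `U + U⁻¹` with `2T`, where
`T` is the transition matrix of the isotropic random walk. If `U` has finite order, then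
`U + U⁻¹` is integral over `ℤ`, hence so are the eigenvalues of `2T` and the coefficients of its
characteristic polynomial. Deleting any edge of the cycle leaves a bipartite graph, and a
bipartite graph on an odd number of vertices has no permutation moving every vertex to a
neighbour. Therefore a permutation contributing to a `k × k` principal minor of `2T` uses every
edge of the cycle, so it is one of the two rotations of the cycle, and the sum of these minors
is `2 ^ (k + 1) / ∏ deg (u i)`. This rational number is an algebraic integer, so `∏ deg (u i)`
divides `2 ^ (k + 1)`; as each of the `k` factors is at least `2`, at most one of them is `4`
and the others are `2`.
-/

section Integrality

variable {R K : Type*} [CommRing R] [Field K] [Algebra R K]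

theorem isIntegral_of_hasEigenvector {M : Type*} [AddCommGroup M] [Module K M] [Module R M]
    [IsScalarTower R K M] {f : Module.End K M} (hf : IsIntegral R f) {μ : K} {x : M}
    (hx : f.HasEigenvector μ x) : IsIntegral R μ := by
  obtain ⟨p, hp, hpf⟩ := hf
  refine ⟨p, hp, ?_⟩
  have heval : (p.map (algebraMap R K)).eval μ • x = 0 := by
    rw [← Module.End.aeval_apply_of_hasEigenvector hx, Polynomial.aeval_map_algebraMap,
      Polynomial.aeval_def, hpf, LinearMap.zero_apply]
  rw [← Polynomial.eval_map]
  exact (smul_eq_zero.1 heval).resolve_right hx.2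

theorem isIntegral_charpoly_coeff {n : Type*} [Fintype n] [DecidableEq n] [IsAlgClosed K]
    {M : Matrix n n K} (hM : ∀ z ∈ spectrum K M, IsIntegral R z) (j : ℕ) :
    IsIntegral R (M.charpoly.coeff j) := by
  refine Polynomial.isIntegral_coeff_of_factors _ ?_ (IsAlgClosed.splits _)
    (fun z hz => hM z (mem_spectrum_of_isRoot_charpoly hz)) j
  rw [(charpoly_monic M).leadingCoeff]
  exact isIntegral_one

theorem isIntegral_add_of_pow_eq_one {A : Type*} [Ring A] [Algebra R A] {u : A} {n : ℕ}
    (hn : 0 < n) (hu : u ^ n = 1) (m : ℕ) : IsIntegral R (u + u ^ m) := by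
  have hint : IsIntegral R u := .of_pow hn (hu ▸ isIntegral_one)
  have hmem : u ∈ Algebra.adjoin R {u} := Algebra.self_mem_adjoin_singleton R u
  exact .of_mem_of_fg _ hint.fg_adjoin_singleton _ (add_mem hmem (pow_mem hmem m))

theorem dvd_of_isIntegral_natCast_div [CharZero K] {a b : ℕ} (hb : b ≠ 0)
    (h : IsIntegral ℤ ((a : K) / b)) : b ∣ a := by
  have hcast : (a : K) / b = algebraMap ℚ K (a / b) := by simp
  rw [hcast, isIntegral_algebraMap_iff (algebraMap ℚ K).injective,
    IsIntegrallyClosed.isIntegral_iff] at h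
  obtain ⟨m, hm⟩ := h
  rw [eq_intCast, eq_div_iff (by exact_mod_cast hb)] at hm
  rw [← Int.natCast_dvd_natCast]
  exact ⟨m, by rw [mul_comm]; exact_mod_cast hm.symm⟩

end Integrality

section SpectralMapping

variable [Fintype V] (G : SimpleGraph V)

theorem sum_arc_terminus_eq (h : V → V → ℂ) (u : V) :
    ∑ f : Arc G with f.1.2 = u, h f.1.1 f.1.2 = ∑ w ∈ G.neighborFinset u, h w u := by
  refine Finset.sum_bij (fun f _ => f.1.1) ?_ ?_ ?_ ?_
  · rintro ⟨⟨w, v⟩, hwv⟩ hf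
    obtain rfl : v = u := by simpa using hf
    simpa using hwv.symm
  · rintro ⟨⟨w, v⟩, _⟩ hf ⟨⟨w', v'⟩, _⟩ hf' (rfl : w = w')
    obtain rfl : v = u := by simpa using hf
    obtain rfl : v' = v := by simpa using hf'
    rfl
  · intro w hw
    exact ⟨⟨(w, u), ((G.mem_neighborFinset u w).1 hw).symm⟩, by simp, rfl⟩
  · rintro ⟨⟨w, v⟩, _⟩ hf
    obtain rfl : v = u := by simpa using hf
    rfl

theorem groverU_apply (e f : Arc G) :
    groverU G e f = (if f.1.2 = e.1.1 then 2 / (G.degree e.1.1 : ℂ) else 0) -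
      if f = ⟨e.1.swap, e.2.symm⟩ then 1 else 0 := by
  obtain ⟨⟨u, v⟩, _⟩ := e
  obtain ⟨⟨a, b⟩, _⟩ := f
  simp only [groverU, Prod.mk.injEq, Prod.swap_prod_mk, Subtype.mk.injEq]
  grind

theorem groverU_mulVec (h : V → V → ℂ) (e : Arc G) :
    (groverU G *ᵥ fun f => h f.1.1 f.1.2) e =
      2 / (G.degree e.1.1 : ℂ) * ∑ w ∈ G.neighborFinset e.1.1, h w e.1.1 - h e.1.2 e.1.1 := by
  simp only [mulVec, dotProduct, groverU_apply, sub_mul, ite_mul, zero_mul, one_mul,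
    Finset.sum_sub_distrib, ← Finset.sum_filter, ← Finset.mul_sum, sum_arc_terminus_eq,
    Finset.filter_eq', Finset.mem_univ, if_true, Finset.sum_singleton, Prod.fst_swap, Prod.snd_swap]

/-- Twice the transition matrix of the isotropic random walk, over `ℂ`. It acts on vertex functions
as `U + U⁻¹` acts on their pullbacks along the origin map of arcs. -/
noncomputable def doubleTransition : Matrix V V ℂ :=
  (2 : ℂ) • (transition G).map (↑)

theorem doubleTransition_apply (u v : V) :
    doubleTransition G u v = if G.Adj u v then 2 / (G.degree u : ℂ) else 0 := by
  have h : doubleTransition G u v = 2 * (transition G u v : ℂ) := rfl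
  rw [h, transition]
  split_ifs <;> simp [div_eq_mul_inv]

theorem doubleTransition_mulVec (x : V → ℂ) (u : V) :
    (doubleTransition G *ᵥ x) u = 2 / (G.degree u : ℂ) * ∑ w ∈ G.neighborFinset u, x w := by
  simp only [mulVec, dotProduct, doubleTransition_apply, ite_mul, zero_mul, ← Finset.sum_filter,
    ← Finset.mul_sum, SimpleGraph.neighborFinset_eq_filter]

theorem groverU_mulVec_origin (x : V → ℂ) :
    (groverU G *ᵥ fun e => x e.1.1) =
      (fun e => (doubleTransition G *ᵥ x) e.1.1) - fun e => x e.1.2 := by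
  ext e
  rw [groverU_mulVec G (fun u _ => x u), Pi.sub_apply, doubleTransition_mulVec]

theorem groverU_mulVec_terminus (x : V → ℂ) :
    (groverU G *ᵥ fun e => x e.1.2) = fun e => x e.1.1 := by
  ext e
  have hdeg : (G.degree e.1.1 : ℂ) ≠ 0 :=
    Nat.cast_ne_zero.2 ((G.degree_pos_iff_exists_adj _).2 ⟨_, e.2⟩).ne'
  rw [groverU_mulVec G (fun _ u => x u), Finset.sum_const,
    SimpleGraph.card_neighborFinset_eq_degree, nsmul_eq_mul]
  field_simp
  ring

variable {G}

theorem groverU_add_pow_mulVec_origin {n : ℕ} (hU : groverU G ^ (n + 1) = 1) (x : V → ℂ) :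
    ((groverU G + groverU G ^ n) *ᵥ fun e => x e.1.1) =
      fun e => (doubleTransition G *ᵥ x) e.1.1 := by
  have hpow : (groverU G ^ n *ᵥ fun e => x e.1.1) = fun e => x e.1.2 := by
    rw [← groverU_mulVec_terminus, mulVec_mulVec, ← pow_succ, hU, one_mulVec]
  rw [add_mulVec, hpow, groverU_mulVec_origin, sub_add_cancel]

theorem isIntegral_of_mem_spectrum_doubleTransition (hper : IsPeriodic G) {z : ℂ}
    (hz : z ∈ spectrum ℂ (doubleTransition G)) : IsIntegral ℤ z := by
  obtain ⟨n, hn, hU⟩ := hper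
  obtain ⟨n, rfl⟩ := Nat.exists_eq_succ_of_ne_zero hn.ne'
  rw [← spectrum_toLin', ← Module.End.hasEigenvalue_iff_mem_spectrum] at hz
  obtain ⟨x, hx⟩ := hz.exists_hasEigenvector
  have hxz : doubleTransition G *ᵥ x = z • x := hx.apply_eq_smul
  -- A `0`-eigenvector may live on isolated vertices, and then its pullback to arcs vanishes.
  obtain rfl | hz0 := eq_or_ne z 0
  · exact isIntegral_zero
  refine isIntegral_of_hasEigenvector (f := toLinAlgEquiv' (groverU G + groverU G ^ n))
    (x := fun e => x e.1.1) ((isIntegral_add_of_pow_eq_one hn hU n).map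
      (toLinAlgEquiv'.toAlgHom.restrictScalars ℤ)) ⟨?_, ?_⟩
  · rw [Module.End.mem_eigenspace_iff, toLinAlgEquiv'_apply, groverU_add_pow_mulVec_origin hU, hxz]
    rfl
  · obtain ⟨v, hv⟩ := Function.ne_iff.1 hx.2
    have hTv : (doubleTransition G *ᵥ x) v ≠ 0 := hxz ▸ smul_ne_zero hz0 hv
    rw [doubleTransition_mulVec] at hTv
    obtain ⟨w, hw, -⟩ := Finset.exists_ne_zero_of_sum_ne_zero (right_ne_zero_of_mul hTv)
    exact fun h => hv (congrFun h ⟨(v, w), (G.mem_neighborFinset v w).1 hw⟩)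

end SpectralMapping

section Cycle

theorem zmod_two_ne_zero {k : ℕ} (hk : 3 ≤ k) : (2 : ZMod k) ≠ 0 := by
  intro h
  have hdvd : k ∣ 2 := (ZMod.natCast_eq_zero_iff 2 k).1 (mod_cast h)
  exact absurd (Nat.le_of_dvd two_pos hdvd) (by omega)

theorem zmod_cyclic_induction {k : ℕ} [NeZero k] {P : ZMod k → Prop} {i : ZMod k} (hi : P i)
    (hstep : ∀ j, P j → P (j + 1)) (j : ZMod k) : P j := by
  have hshift (n : ℕ) : P (i + n) := by
    induction n with
    | zero => simpa using hi
    | succ n ih => simpa [add_assoc] using hstep _ ih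
  simpa using hshift (j - i).val

theorem sign_eq_one_of_odd_of_pow_eq_one {n : Type*} [Fintype n] [DecidableEq n] {σ : Equiv.Perm n}
    {k : ℕ} (hodd : Odd k) (hσ : σ ^ k = 1) : Equiv.Perm.sign σ = 1 := by
  have hpow : Equiv.Perm.sign σ ^ k = 1 := by rw [← map_pow, hσ, map_one]
  rwa [Int.units_pow_eq_pow_mod_two, Nat.odd_iff.1 hodd, pow_one] at hpow

theorem eq_addRight_one_or_inv {k : ℕ} [NeZero k] (hk : 3 ≤ k) {σ : Equiv.Perm (ZMod k)}
    (hσ : ∀ i, ∃ j, s(σ j, j) = s(i, i + 1)) :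
    σ = Equiv.addRight 1 ∨ σ = (Equiv.addRight 1)⁻¹ := by
  have hedge (i : ZMod k) : σ i = i + 1 ∨ σ (i + 1) = i := by
    obtain ⟨j, hj⟩ := hσ i
    rcases Sym2.eq_iff.1 hj with ⟨h, rfl⟩ | ⟨h, rfl⟩
    exacts [.inr h, .inl h]
  by_cases! hback : ∃ i, σ (i + 1) = i
  · right
    obtain ⟨i, hi⟩ := hback
    have hall : ∀ j, σ (j + 1) = j := by
      refine zmod_cyclic_induction hi fun j hj => (hedge (j + 1)).resolve_left fun h => ?_
      exact zmod_two_ne_zero hk (by linear_combination hj - h)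
    exact eq_inv_of_mul_eq_one_left (Equiv.ext hall)
  · exact .inl (Equiv.ext fun i => (hedge i).resolve_right (hback i))

variable {G : SimpleGraph V}

theorem two_le_degree_of_cycle [Fintype V] {k : ℕ} (hk : 3 ≤ k) {c : ZMod k → V}
    (hcinj : Function.Injective c) (hcadj : ∀ i, G.Adj (c i) (c (i + 1))) (i : ZMod k) :
    2 ≤ G.degree (c i) := by
  have hprev : G.Adj (c i) (c (i - 1)) := by simpa using (hcadj (i - 1)).symm
  have hne : c (i + 1) ≠ c (i - 1) := fun h =>
    zmod_two_ne_zero hk (by linear_combination hcinj h)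
  rw [← SimpleGraph.card_neighborFinset_eq_degree]
  exact Finset.one_lt_card.2 ⟨c (i + 1), by simpa using hcadj i,
    c (i - 1), by simpa using hprev, hne⟩

theorem isTree_deleteEdges_of_not_isBridge [Finite V] (hconn : G.Connected)
    (hcard : Nat.card V = Nat.card G.edgeSet) {e : Sym2 V} (he : e ∈ G.edgeSet)
    (hbridge : ¬ G.IsBridge e) : (G.deleteEdges {e}).IsTree := by
  induction e with | h u v =>
  refine SimpleGraph.isTree_iff_connected_and_card.2
    ⟨hconn.connected_delete_edge_of_not_isBridge hbridge, ?_⟩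
  rw [SimpleGraph.edgeSet_deleteEdges, hcard, Nat.card_coe_set_eq, Nat.card_coe_set_eq,
    Set.ncard_sdiff_singleton_add_one he]

variable {k : ℕ} [NeZero k] (hk : 3 ≤ k) {c : ZMod k → V} (hcinj : Function.Injective c)
  (hcadj : ∀ i, G.Adj (c i) (c (i + 1)))

include hk hcinj hcadj

theorem not_isBridge_of_cycle (i : ZMod k) : ¬ G.IsBridge s(c i, c (i + 1)) := by
  rw [SimpleGraph.isBridge_iff, not_not]
  refine (zmod_cyclic_induction (P := fun j => SimpleGraph.Reachable _ (c (i + 1)) (c j))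
    (SimpleGraph.Reachable.refl _) (fun j hj => ?_) i).symm
  by_cases hji : j = i
  · rw [hji]
  refine hj.trans (SimpleGraph.Adj.reachable ?_)
  rw [SimpleGraph.deleteEdges_adj, Set.mem_singleton_iff, Sym2.eq_iff, hcinj.eq_iff, hcinj.eq_iff,
    hcinj.eq_iff, hcinj.eq_iff]
  refine ⟨hcadj j, ?_⟩
  rintro (⟨h, -⟩ | ⟨h, h'⟩)
  · exact hji h
  · exact zmod_two_ne_zero hk (by linear_combination h' - h)

theorem isBipartite_deleteEdges_of_cycle [Finite V] (hconn : G.Connected)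
    (hcard : Nat.card V = Nat.card G.edgeSet) (i : ZMod k) :
    (G.deleteEdges {s(c i, c (i + 1))}).IsBipartite :=
  (isTree_deleteEdges_of_not_isBridge hconn hcard (hcadj i)
    (not_isBridge_of_cycle hk hcinj hcadj i)).isBipartite

end Cycle

section Determinant

theorem exists_not_adj_of_isBipartite {n : Type*} [Fintype n] {H : SimpleGraph n}
    (hH : H.IsBipartite) (hodd : Odd (Fintype.card n)) (σ : Equiv.Perm n) :
    ∃ v, ¬ H.Adj (σ v) v := by
  by_contra! hadj
  obtain ⟨C⟩ := hH
  let color : n → ZMod 2 := C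
  have eq_add_one_of_ne : ∀ a b : ZMod 2, a ≠ b → a = b + 1 := by decide
  have hflip (v : n) : color (σ v) = color v + 1 := eq_add_one_of_ne _ _ (C.valid (hadj v))
  have hsum : ∑ v, color v = ∑ v, color v + (Fintype.card n : ZMod 2) := by
    conv_lhs => rw [← Equiv.sum_comp σ color]
    simp [hflip, Finset.sum_add_distrib]
  exact ZMod.natCast_ne_zero_iff_odd.2 hodd (left_eq_add.1 hsum)

variable {G : SimpleGraph V}

theorem exists_mk_eq_of_isBipartite_deleteEdges {e : Sym2 V}
    (hG : (G.deleteEdges {e}).IsBipartite) {n : Type*} [Fintype n] (hodd : Odd (Fintype.card n))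
    (f : n → V) {σ : Equiv.Perm n} (hσ : ∀ v, G.Adj (f (σ v)) (f v)) :
    ∃ v, s(f (σ v), f v) = e := by
  have hcomap : ((G.deleteEdges {e}).comap f).IsBipartite :=
    hG.of_hom (SimpleGraph.Hom.comap f _)
  obtain ⟨v, hv⟩ := exists_not_adj_of_isBipartite hcomap hodd σ
  refine ⟨v, ?_⟩
  simpa [SimpleGraph.deleteEdges_adj, hσ v] using hv

variable {R : Type*} [CommRing R] {M : Matrix V V R} (hM : ∀ u v, M u v ≠ 0 → G.Adj u v)

include hM

theorem adj_of_prod_ne_zero {n : Type*} [Fintype n] {f : n → V} {σ : Equiv.Perm n}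
    (hσ : ∏ v, M (f (σ v)) (f v) ≠ 0) (v : n) : G.Adj (f (σ v)) (f v) :=
  hM _ _ fun h => hσ (Finset.prod_eq_zero (Finset.mem_univ v) h)

theorem det_submatrix_eq_zero_of_notMem {u v : V} (hG : (G.deleteEdges {s(u, v)}).IsBipartite)
    {n : Type*} [Fintype n] [DecidableEq n] (hodd : Odd (Fintype.card n)) {f : n → V}
    (hu : u ∉ Set.range f) : (M.submatrix f f).det = 0 := by
  rw [det_apply]
  refine Finset.sum_eq_zero fun σ _ => ?_
  by_contra hne
  have hadj := adj_of_prod_ne_zero hM (right_ne_zero_of_smul hne)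
  obtain ⟨w, hw⟩ := exists_mk_eq_of_isBipartite_deleteEdges hG hodd f hadj
  have hmem : u ∈ s(f (σ w), f w) := hw ▸ Sym2.mem_mk_left u v
  rcases Sym2.mem_iff.1 hmem with rfl | rfl
  exacts [hu ⟨_, rfl⟩, hu ⟨_, rfl⟩]

variable {k : ℕ} [NeZero k] (hk : 3 ≤ k) (hodd : Odd k) {c : ZMod k → V}
  (hcinj : Function.Injective c)
  (hG : ∀ i, (G.deleteEdges {s(c i, c (i + 1))}).IsBipartite)

include hk hodd hcinj hG

theorem det_submatrix_cycle :
    (M.submatrix c c).det = ∏ i, M (c (i + 1)) (c i) + ∏ i, M (c i) (c (i + 1)) := by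
  have hsign : Equiv.Perm.sign (Equiv.addRight (1 : ZMod k)) = 1 :=
    sign_eq_one_of_odd_of_pow_eq_one hodd (by simp)
  have hne : Equiv.addRight (1 : ZMod k) ≠ (Equiv.addRight 1)⁻¹ := fun h =>
    zmod_two_ne_zero hk (by
      simpa [one_add_one_eq_two] using DFunLike.congr_fun (eq_inv_iff_mul_eq_one.1 h) 0)
  rw [det_apply, ← Finset.sum_subset (Finset.subset_univ {Equiv.addRight 1, (Equiv.addRight 1)⁻¹}),
    Finset.sum_pair hne, Equiv.Perm.sign_inv, hsign, one_smul, one_smul,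
    ← Equiv.prod_comp (Equiv.addRight 1) fun i => M.submatrix c c ((Equiv.addRight 1)⁻¹ i) i]
  · simp
  · intro σ _ hσ
    by_contra hprod
    refine hσ ?_
    have hadj := adj_of_prod_ne_zero hM (right_ne_zero_of_smul hprod)
    rw [Finset.mem_insert, Finset.mem_singleton]
    refine eq_addRight_one_or_inv hk fun i => ?_
    obtain ⟨j, hj⟩ :=
      exists_mk_eq_of_isBipartite_deleteEdges (hG i) (by simpa using hodd) c hadj
    exact ⟨j, Sym2.map.injective hcinj hj⟩

theorem charpoly_coeff_card_sub_cycle [Fintype V] [DecidableEq V] :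
    M.charpoly.coeff (Fintype.card V - k) =
      -(∏ i, M (c (i + 1)) (c i) + ∏ i, M (c i) (c (i + 1))) := by
  have hkV : k ≤ Fintype.card V := by
    simpa [ZMod.card] using Fintype.card_le_of_injective c hcinj
  have hcycle : (Finset.univ.map ⟨c, hcinj⟩).card = k := by simp [ZMod.card]
  rw [charpoly_coeff_eq_sum_minors M k hkV, hodd.neg_one_pow, neg_one_mul,
    ← det_submatrix_cycle hM hk hodd hcinj hG,
    Finset.sum_eq_single_of_mem (Finset.univ.map ⟨c, hcinj⟩) (by simp [ZMod.card])]
  · let e : ZMod k ≃ Finset.univ.map ⟨c, hcinj⟩ :=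
      (Equiv.ofInjective c hcinj).trans (Equiv.subtypeEquivRight fun v => by simp)
    convert congrArg Neg.neg (det_submatrix_equiv_self e (M.submatrix (↑) (↑))).symm
    rfl
  · intro s hs hne
    have hsk : s.card = k := (Finset.mem_powersetCard.1 hs).2
    obtain ⟨i, hi⟩ : ∃ i, c i ∉ s := by
      by_contra! hmem
      have hsub : Finset.univ.map ⟨c, hcinj⟩ ⊆ s := by simpa [Finset.subset_iff] using hmem
      exact hne (Finset.eq_of_subset_of_card_le hsub (by rw [hsk, hcycle])).symm
    convert det_submatrix_eq_zero_of_notMem hM (hG i) (n := s) ?_ (f := (↑)) ?_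
    · simpa [hsk] using hodd
    · simpa using hi

end Determinant

theorem charpoly_doubleTransition_coeff_card_sub_cycle [Fintype V] [DecidableEq V]
    {G : SimpleGraph V} {k : ℕ} [NeZero k] (hk : 3 ≤ k) (hodd : Odd k) {c : ZMod k → V}
    (hcinj : Function.Injective c) (hcadj : ∀ i, G.Adj (c i) (c (i + 1)))
    (hG : ∀ i, (G.deleteEdges {s(c i, c (i + 1))}).IsBipartite) :
    (doubleTransition G).charpoly.coeff (Fintype.card V - k) =
      -(((2 ^ (k + 1) : ℕ) : ℂ) / ((∏ i, G.degree (c i) : ℕ) : ℂ)) := by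
  have hsupp (u v : V) (huv : doubleTransition G u v ≠ 0) : G.Adj u v := by
    by_contra hadj
    exact huv (by rw [doubleTransition_apply, if_neg hadj])
  have hshift : ∏ i, 2 / (G.degree (c (i + 1)) : ℂ) = ∏ i, 2 / (G.degree (c i) : ℂ) :=
    Equiv.prod_comp (Equiv.addRight 1) fun i => 2 / (G.degree (c i) : ℂ)
  rw [charpoly_coeff_card_sub_cycle hsupp hk hodd hcinj hG]
  simp only [doubleTransition_apply, hcadj, (hcadj _).symm, if_true]
  rw [hshift, Finset.prod_div_distrib, Finset.prod_const, Finset.card_univ, ZMod.card]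
  push_cast
  ring

theorem eq_two_or_existsUnique_eq_four_of_prod_dvd {ι : Type*} [Fintype ι] {d : ι → ℕ}
    (hd : ∀ i, 2 ≤ d i) (h : ∏ i, d i ∣ 2 ^ (Fintype.card ι + 1)) :
    (∀ i, d i = 2) ∨ ∃! i, d i = 4 ∧ ∀ l, l ≠ i → d l = 2 := by
  have hpow (i : ι) : ∃ b, d i = 2 ^ (b + 1) := by
    obtain ⟨m, -, hm⟩ := (Nat.dvd_prime_pow Nat.prime_two).1
      ((Finset.dvd_prod_of_mem d (Finset.mem_univ i)).trans h)
    obtain ⟨b, rfl⟩ : ∃ b, m = b + 1 := Nat.exists_eq_succ_of_ne_zero fun h0 => by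
      have := hd i
      simp [hm, h0] at this
    exact ⟨b, hm⟩
  choose b hb using hpow
  have hsum : ∑ i, b i ≤ 1 := by
    simp only [hb, Finset.prod_pow_eq_pow_sum] at h
    have hle := (Nat.pow_dvd_pow_iff_le_right one_lt_two).1 h
    simp only [Finset.sum_add_distrib, Finset.sum_const, Finset.card_univ, smul_eq_mul] at hle
    omega
  by_cases! hall : ∀ i, b i = 0
  · exact .inl fun i => by simp [hb, hall]
  obtain ⟨i, hi⟩ := hall
  have hexcess (j : ι) (hj : b j ≠ 0) : i = j ∧ b i = 1 :=
    Finset.sum_le_one_iff.1 hsum i j (Finset.mem_univ i) (Finset.mem_univ j) hi hj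
  have hfour : d i = 4 := by rw [hb, (hexcess i hi).2]; norm_num
  have htwo (l : ι) (hl : l ≠ i) : d l = 2 := by
    have hl0 : b l = 0 := by
      by_contra hne
      exact hl (hexcess l hne).1.symm
    rw [hb, hl0, zero_add, pow_one]
  refine .inr ⟨i, ⟨hfour, htwo⟩, fun j hj => ?_⟩
  by_contra hne
  exact absurd (hj.1.symm.trans (htwo j hne)) (by norm_num)

theorem cycle_degree_of_periodic_general [Fintype V] {G : SimpleGraph V} {k : ℕ} [NeZero k]
    (hk : 3 ≤ k) (hodd : Odd k) {c : ZMod k → V} (hcinj : Function.Injective c)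
    (hcadj : ∀ i, G.Adj (c i) (c (i + 1)))
    (hG : ∀ i, (G.deleteEdges {s(c i, c (i + 1))}).IsBipartite) (hper : IsPeriodic G) :
    (∀ i, G.degree (c i) = 2) ∨
      ∃! i, G.degree (c i) = 4 ∧ ∀ l, l ≠ i → G.degree (c l) = 2 := by
  have hdeg := two_le_degree_of_cycle hk hcinj hcadj
  have hint := isIntegral_charpoly_coeff
    (fun _ hz => isIntegral_of_mem_spectrum_doubleTransition hper hz) (Fintype.card V - k)
  rw [charpoly_doubleTransition_coeff_card_sub_cycle hk hodd hcinj hcadj hG,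
    IsIntegral.neg_iff] at hint
  have hprod : ∏ i, G.degree (c i) ≠ 0 :=
    Finset.prod_ne_zero_iff.2 fun i _ => (two_pos.trans_le (hdeg i)).ne'
  have hdvd : ∏ i, G.degree (c i) ∣ 2 ^ (k + 1) := dvd_of_isIntegral_natCast_div hprod hint
  exact eq_two_or_existsUnique_eq_four_of_prod_dvd hdeg (by rwa [ZMod.card])

/-- Let `k ≥ 3` be odd and let `G ∈ 𝒪(k)` (a connected graph with as many
vertices as edges, containing a `k`-cycle `c 0 ∼ c 1 ∼ … ∼ c (k-1) ∼ c 0`). If `G` is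
periodic, then either all cycle vertices have degree `2`, or there is a unique cycle vertex
of degree `4` while all the others have degree `2`. -/
theorem cycle_degree_of_periodic {V : Type*} [Fintype V] [DecidableEq V] (G : SimpleGraph V)
    (hconn : G.Connected) (k : ℕ) [NeZero k] (hk3 : 3 ≤ k) (hkodd : Odd k)
    (c : ZMod k → V) (hcinj : Function.Injective c)
    (hcadj : ∀ i : ZMod k, G.Adj (c i) (c (i + 1)))
    (hcard : Fintype.card V = G.edgeFinset.card)
    (hper : IsPeriodic G) :
    (∀ i : ZMod k, G.degree (c i) = 2) ∨
      (∃! i : ZMod k, G.degree (c i) = 4 ∧ ∀ l : ZMod k, l ≠ i → G.degree (c l) = 2) := by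
  have hcard' : Nat.card V = Nat.card G.edgeSet := by
    rw [Nat.card_eq_fintype_card, hcard, SimpleGraph.edgeFinset_card, Nat.card_eq_fintype_card]
  exact cycle_degree_of_periodic_general hk3 hkodd hcinj hcadj
    (isBipartite_deleteEdges_of_cycle hk3 hcinj hcadj hconn hcard') hper

end GroverPaper
end

section
/- In the setting where G ∈ 𝒪(k) (k ≥ 3 odd) has unique cycle vertices u=u_0,u_1,…,u_{k−1} with deg(u)=4 and deg(u_i)=2 for i ≥ 1, for every t ≥ 1 with k+2t ≤ n one has ρ_{n−k−2t} = (−1)^{t+1} · 2^{−k} · K_{2t}. -/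
open Matrix

attribute [local instance] Classical.propDecidable

namespace GroverPaper

variable {V : Type*}

/-- `M(e) = 1/(deg x · deg y)` for an edge `e = xy`. -/
noncomputable def edgeM [Fintype V] (G : SimpleGraph V) : Sym2 V → ℝ :=
  Sym2.lift ⟨fun x y => 1 / ((G.degree x : ℝ) * (G.degree y : ℝ)), fun x y => by simp [mul_comm]⟩

/-- The sum, over all `i`-matchings contained in the edge collection `A`, of the product of
the `M`-values of the matching. (For `i = 0` this is `1`; if there is no such matching it
is `0`.) -/
noncomputable def matchSum [Fintype V] (G : SimpleGraph V) (A : Finset (Sym2 V)) (i : ℕ) : ℝ :=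
  ∑ S ∈ A.powerset.filter (fun S => S.card = i ∧
      ∀ e ∈ S, ∀ f ∈ S, e ≠ f → ∀ x : V, ¬(x ∈ e ∧ x ∈ f)),
    ∏ e ∈ S, edgeM G e

/-- The edges of `G` that neither lie on the cycle `c 0 ∼ c 1 ∼ … ∼ c (k-1) ∼ c 0` nor are
incident to `u = c 0`; this is the edge set `E_T` of the paper. -/
noncomputable def treeEdges [Fintype V] {k : ℕ} (G : SimpleGraph V) (c : ZMod k → V) :
    Finset (Sym2 V) :=
  G.edgeFinset.filter fun e => (∀ i : ZMod k, e ≠ s(c i, c (i + 1))) ∧ c 0 ∉ e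

/-- `K_{2i}` of the paper: the sum over all `i`-matchings in `E_T` of the products of the
`M`-values. -/
noncomputable def Km [Fintype V] {k : ℕ} (G : SimpleGraph V) (c : ZMod k → V) (i : ℕ) : ℝ :=
  matchSum G (treeEdges G c) i

/-- `K^g_{2i}(2,…,r)` of the paper, where `v` is the path `u = v 0, v 1, v 2, …` so that
`g_j = v_{j-1} v_j`: the sum over all `i`-matchings in `E_T ∖ {g_2,…,g_r}`. -/
noncomputable def Kg [Fintype V] {k : ℕ} (G : SimpleGraph V) (c : ZMod k → V)
    (v : ℕ → V) (i r : ℕ) : ℝ :=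
  matchSum G (treeEdges G c \ (Finset.Icc 2 r).image fun j => s(v (j - 1), v j)) i

/-- `L_{2i}(2,…,r) = K^g_{2i}(2,…,r) + K^h_{2i}(2,…,r)` of the paper. -/
noncomputable def Lm [Fintype V] {k : ℕ} (G : SimpleGraph V) (c : ZMod k → V)
    (v w : ℕ → V) (i r : ℕ) : ℝ :=
  Kg G c v i r + Kg G c w i r

/-!
Expand the characteristic polynomial over the permutations that move an odd number of vertices,
each along an edge. Every edge off the cycle is a bridge, and a permutation moving a vertex along a
bridge must bring it straight back, since its orbits are closed. A permutation with odd support is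
not an involution, so it rotates the whole cycle, forwards or backwards, and inversion exchanges
the two directions; this gives the factor `2`. What is left after removing a forward rotation moves
along a forest, hence is an involution, and its 2-cycles form a matching off the cycle.
-/

/-- `σ` moves along the edges of `G`: every vertex is fixed or sent to a neighbour. The
characteristic polynomial of a matrix supported on `G` is a sum over these permutations. -/
def MovesAlong (G : SimpleGraph V) (σ : Equiv.Perm V) : Prop :=
  ∀ v, σ v ≠ v → G.Adj v (σ v)

namespace MovesAlong

variable {G : SimpleGraph V} {σ : Equiv.Perm V}

theorem inv (hσ : MovesAlong G σ) : MovesAlong G σ⁻¹ := by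
  intro v hv
  have hadj := hσ (σ⁻¹ v) fun h => hv (by simpa using h.symm)
  simpa using hadj.symm

theorem apply_apply_of_isBridge [Finite V] (hσ : MovesAlong G σ) {v : V}
    (hv : G.IsBridge s(v, σ v)) : σ (σ v) = v := by
  by_contra hne
  -- `σ` never leaves the side of the bridge containing `σ v`, so its orbits cannot return to `v`.
  set side : Set V := {w | (G.deleteEdges {s(v, σ v)}).Reachable (σ v) w}
  have hv_side : v ∉ side := fun h => SimpleGraph.isBridge_iff.1 hv h.symm
  have hmaps : Set.MapsTo σ side side := by
    intro w hw
    by_cases hfix : σ w = w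
    · rwa [hfix]
    have hwv : w ≠ v := fun h => hv_side (h ▸ hw)
    have hedge : s(w, σ w) ≠ s(v, σ v) := by
      rw [Ne, Sym2.eq_iff]
      rintro (⟨h, -⟩ | ⟨rfl, h⟩)
      · exact hwv h
      · exact hne h
    exact hw.trans (SimpleGraph.deleteEdges_adj.2 ⟨hσ w hfix, hedge⟩).reachable
  have hinv := Equiv.Perm.perm_symm_mapsTo_of_mapsTo σ hmaps
    (SimpleGraph.Reachable.refl (σ v) : σ v ∈ side)
  exact hv_side (by simpa using hinv)

theorem involutive_of_isAcyclic [Finite V] (hσ : MovesAlong G σ) (hG : G.IsAcyclic) :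
    Function.Involutive σ := by
  intro v
  by_cases hv : σ v = v
  · rw [hv, hv]
  · exact hσ.apply_apply_of_isBridge (SimpleGraph.isAcyclic_iff_forall_isBridge.1 hG (hσ v hv))

end MovesAlong

section CharpolyExpansion

variable {n R : Type*} [Fintype n] [DecidableEq n] [CommRing R]

theorem prod_charmatrix_apply_perm (M : Matrix n n R) (hM : ∀ i, M i i = 0) (σ : Equiv.Perm n) :
    ∏ i, M.charmatrix i (σ i) =
      Polynomial.C ((-1) ^ σ.support.card * ∏ i ∈ σ.support, M i (σ i)) *
        Polynomial.X ^ (Fintype.card n - σ.support.card) := by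
  rw [← Finset.prod_neg, ← Finset.prod_mul_prod_compl σ.support, map_prod, ← Finset.card_compl,
    ← Finset.prod_const]
  congr 1
  · refine Finset.prod_congr rfl fun i hi => ?_
    rw [charmatrix_apply_ne _ _ _ (Equiv.Perm.mem_support.1 hi).symm, map_neg]
  · refine Finset.prod_congr rfl fun i hi => ?_
    have hfix : σ i = i := by simpa using hi
    rw [hfix, charmatrix_apply_eq, hM, map_zero, sub_zero]

theorem coeff_charpoly_eq_sum_perm (M : Matrix n n R) (hM : ∀ i, M i i = 0) {j : ℕ}
    (hj : j ≤ Fintype.card n) :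
    M.charpoly.coeff (Fintype.card n - j) =
      (-1) ^ j * ∑ σ : Equiv.Perm n with σ.support.card = j,
        ((Equiv.Perm.sign σ : ℤ) : R) * ∏ i ∈ σ.support, M i (σ i) := by
  rw [charpoly, ← det_transpose, det_apply', Polynomial.finsetSum_coeff, Finset.mul_sum,
    Finset.sum_filter]
  refine Finset.sum_congr rfl fun σ _ => ?_
  have hle : σ.support.card ≤ Fintype.card n := Finset.card_le_univ _
  have hexp : Fintype.card n - j = Fintype.card n - σ.support.card ↔ σ.support.card = j := by omega
  simp only [transpose_apply, prod_charmatrix_apply_perm M hM, ← Polynomial.C_eq_intCast,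
    Polynomial.coeff_C_mul, Polynomial.coeff_X_pow, hexp]
  split_ifs with h
  · rw [h]
    ring
  · simp only [mul_zero]

end CharpolyExpansion

section PermWeight

variable [Fintype V] [DecidableEq V] {G : SimpleGraph V}

/-- The permutations that move exactly `j` vertices, each of them along an edge of `G`. -/
noncomputable def movingPerms (G : SimpleGraph V) (j : ℕ) : Finset (Equiv.Perm V) :=
  {σ | MovesAlong G σ ∧ σ.support.card = j}

/-- The contribution of a permutation moving along `G` to the characteristic polynomial of the
transition matrix, up to the sign `(-1)` to the number of moved vertices. -/
noncomputable def permWeight (G : SimpleGraph V) (σ : Equiv.Perm V) : ℝ :=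
  ((Equiv.Perm.sign σ : ℤ) : ℝ) * ∏ v ∈ σ.support, (G.degree v : ℝ)⁻¹

theorem mem_movingPerms {j : ℕ} {σ : Equiv.Perm V} :
    σ ∈ movingPerms G j ↔ MovesAlong G σ ∧ σ.support.card = j := by
  simp [movingPerms]

theorem inv_mem_movingPerms {j : ℕ} {σ : Equiv.Perm V} :
    σ⁻¹ ∈ movingPerms G j ↔ σ ∈ movingPerms G j := by
  rw [mem_movingPerms, mem_movingPerms, Equiv.Perm.support_inv]
  exact and_congr_left fun _ => ⟨fun h => inv_inv σ ▸ h.inv, MovesAlong.inv⟩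

theorem permWeight_inv (G : SimpleGraph V) (σ : Equiv.Perm V) :
    permWeight G σ⁻¹ = permWeight G σ := by
  rw [permWeight, permWeight, Equiv.Perm.sign_inv, Equiv.Perm.support_inv]

theorem permWeight_mul_of_disjoint (G : SimpleGraph V) {σ τ : Equiv.Perm V}
    (h : σ.Disjoint τ) : permWeight G (σ * τ) = permWeight G σ * permWeight G τ := by
  simp only [permWeight, h.support_mul, Finset.prod_union h.disjoint_support,
    Equiv.Perm.sign_mul, Units.val_mul, Int.cast_mul]
  ring

theorem prod_transition_of_movesAlong {σ : Equiv.Perm V} (hσ : MovesAlong G σ) :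
    ∏ v ∈ σ.support, transition G v (σ v) = ∏ v ∈ σ.support, (G.degree v : ℝ)⁻¹ :=
  Finset.prod_congr rfl fun v hv => by
    rw [transition, if_pos (hσ v (Equiv.Perm.mem_support.1 hv)), one_div]

theorem prod_transition_of_not_movesAlong {σ : Equiv.Perm V} (hσ : ¬MovesAlong G σ) :
    ∏ v ∈ σ.support, transition G v (σ v) = 0 := by
  rw [MovesAlong] at hσ
  push Not at hσ
  obtain ⟨v, hv, hadj⟩ := hσ
  exact Finset.prod_eq_zero (Equiv.Perm.mem_support.2 hv) (if_neg hadj)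

theorem coeff_charpoly_transition (G : SimpleGraph V) {j : ℕ} (hj : j ≤ Fintype.card V) :
    (transition G).charpoly.coeff (Fintype.card V - j) =
      (-1) ^ j * ∑ σ ∈ movingPerms G j, permWeight G σ := by
  rw [coeff_charpoly_eq_sum_perm _ (fun v => if_neg G.irrefl) hj, movingPerms]
  simp only [and_comm (a := MovesAlong G _), ← Finset.filter_filter]
  rw [Finset.sum_filter _ (fun σ => permWeight G σ)]
  congr 1
  refine Finset.sum_congr rfl fun σ _ => ?_
  split_ifs with hσ
  · rw [permWeight, prod_transition_of_movesAlong hσ]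
  · rw [prod_transition_of_not_movesAlong hσ, mul_zero]

end PermWeight

section Matchings

variable [Fintype V] [DecidableEq V] {τ : Equiv.Perm V}

theorem sign_of_involutive (hτ : Function.Involutive τ) {t : ℕ}
    (hcard : τ.support.card = 2 * t) : Equiv.Perm.sign τ = (-1) ^ t := by
  have hsq : τ ^ 2 = 1 := by
    ext v
    simp [pow_two, hτ v]
  have htype := Equiv.Perm.cycleType_of_pow_prime_eq_one (p := 2) hsq
  have hsum : τ.cycleType.sum = 2 * t := by rw [Equiv.Perm.sum_cycleType, hcard]
  have hcount : τ.cycleType.card = t := by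
    rw [htype, Multiset.sum_replicate, smul_eq_mul] at hsum
    omega
  rw [Equiv.Perm.sign_of_cycleType, hsum, hcount, pow_add, (even_two_mul t).neg_one_pow, one_mul]

/-- The edges `s(v, τ v)` along which `τ` moves vertices. For an involution these edges form a
matching. -/
def movedEdges (τ : Equiv.Perm V) : Finset (Sym2 V) :=
  τ.support.image fun v => s(v, τ v)

theorem mk_mem_movedEdges (hτ : Function.Involutive τ) {v w : V} :
    s(v, w) ∈ movedEdges τ ↔ τ v = w ∧ v ≠ w := by
  simp only [movedEdges, Finset.mem_image, Equiv.Perm.mem_support, Sym2.eq_iff]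
  constructor
  · rintro ⟨x, hx, ⟨rfl, rfl⟩ | ⟨rfl, rfl⟩⟩
    · exact ⟨rfl, hx.symm⟩
    · exact ⟨hτ x, hx⟩
  · rintro ⟨rfl, hne⟩
    exact ⟨v, hne.symm, Or.inl ⟨rfl, rfl⟩⟩

theorem filter_support_mk_eq (hτ : Function.Involutive τ) {v : V} (hv : v ∈ τ.support) :
    {w ∈ τ.support | s(w, τ w) = s(v, τ v)} = {v, τ v} := by
  ext w
  simp only [Finset.mem_filter, Finset.mem_insert, Finset.mem_singleton, Sym2.eq_iff]
  constructor
  · rintro ⟨-, ⟨h, -⟩ | ⟨h, -⟩⟩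
    · exact Or.inl h
    · exact Or.inr h
  · rintro (rfl | rfl)
    · exact ⟨hv, Or.inl ⟨rfl, rfl⟩⟩
    · exact ⟨Equiv.Perm.apply_mem_support.2 hv, Or.inr ⟨rfl, hτ v⟩⟩

@[to_additive]
theorem prod_movedEdges {M : Type*} [CommMonoid M] (hτ : Function.Involutive τ) (f : V → M)
    (F : Sym2 V → M) (hF : ∀ v w, F s(v, w) = f v * f w) :
    ∏ e ∈ movedEdges τ, F e = ∏ v ∈ τ.support, f v := by
  rw [← Finset.prod_fiberwise_of_maps_to (t := movedEdges τ) (g := fun v => s(v, τ v))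
    fun v hv => Finset.mem_image_of_mem _ hv]
  refine Finset.prod_congr rfl fun e he => ?_
  obtain ⟨v, hv, rfl⟩ := Finset.mem_image.1 he
  rw [filter_support_mk_eq hτ hv, Finset.prod_pair (Equiv.Perm.mem_support.1 hv).symm, hF]

theorem card_support_eq_two_mul_card_movedEdges (hτ : Function.Involutive τ) :
    τ.support.card = 2 * (movedEdges τ).card := by
  have hsum := sum_movedEdges hτ (fun _ => 1) (fun _ => 2) fun _ _ => rfl
  rw [Finset.sum_const, ← Finset.card_eq_sum_ones, smul_eq_mul] at hsum
  rw [← hsum, mul_comm]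

/-- No two edges of `S` share a vertex. This is the condition on `S` in `matchSum`. -/
def IsMatching (S : Finset (Sym2 V)) : Prop :=
  ∀ e ∈ S, ∀ f ∈ S, e ≠ f → ∀ x : V, ¬(x ∈ e ∧ x ∈ f)

theorem isMatching_movedEdges (hτ : Function.Involutive τ) : IsMatching (movedEdges τ) := by
  have heq : ∀ e ∈ movedEdges τ, ∀ x ∈ e, e = s(x, τ x) := by
    rintro e he x ⟨y, rfl⟩
    rw [((mk_mem_movedEdges hτ).1 he).1]
  rintro e he f hf hef x ⟨hxe, hxf⟩
  exact hef ((heq e he x hxe).trans (heq f hf x hxf).symm)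

theorem movedEdges_injOn :
    Set.InjOn movedEdges {τ : Equiv.Perm V | Function.Involutive τ} := by
  intro τ hτ τ' hτ' h
  have hiff : ∀ v w, τ v = w ∧ v ≠ w ↔ τ' v = w ∧ v ≠ w := fun v w => by
    rw [← mk_mem_movedEdges hτ, h, mk_mem_movedEdges hτ']
  ext v
  by_cases hv : τ v = v
  · by_contra hne
    exact hne (((hiff v (τ' v)).2 ⟨rfl, fun h' => hne (hv.trans h')⟩).1)
  · exact ((hiff v (τ v)).1 ⟨rfl, fun h' => hv h'.symm⟩).1.symm

theorem exists_involutive_movedEdges_eq {S : Finset (Sym2 V)} (hS : IsMatching S)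
    (hloop : ∀ v, s(v, v) ∉ S) :
    ∃ τ : Equiv.Perm V, Function.Involutive τ ∧ movedEdges τ = S := by
  have huniq : ∀ v w w', s(v, w) ∈ S → s(v, w') ∈ S → w = w' := by
    intro v w w' hw hw'
    by_contra hne
    exact hS _ hw _ hw' (fun h => hne (Sym2.congr_right.1 h)) v ⟨by simp, by simp⟩
  have hpartner : ∀ v, ∃ w, s(v, w) ∈ S ∨ (w = v ∧ ∀ x, s(v, x) ∉ S) := by
    intro v
    by_cases h : ∃ w, s(v, w) ∈ S
    · exact h.imp fun w hw => Or.inl hw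
    · exact ⟨v, Or.inr ⟨rfl, not_exists.1 h⟩⟩
  choose f hf using hpartner
  have hf_eq : ∀ {v w}, s(v, w) ∈ S → f v = w := fun {v w} hw =>
    (hf v).elim (fun h => huniq v _ _ h hw) fun h => absurd hw (h.2 w)
  have hf_inv : Function.Involutive f := by
    intro v
    rcases hf v with h | ⟨h, -⟩
    · exact hf_eq (Sym2.eq_swap ▸ h)
    · rw [h, h]
  refine ⟨hf_inv.toPerm f, hf_inv, ?_⟩
  ext ⟨v, w⟩
  refine (mk_mem_movedEdges (τ := hf_inv.toPerm f) hf_inv).trans ⟨?_, fun hw => ?_⟩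
  · rintro ⟨rfl, hne⟩
    exact (hf v).resolve_right fun h => hne h.1.symm
  · exact ⟨hf_eq hw, fun h => hloop w (h ▸ hw)⟩

theorem movedEdges_subset_edgeFinset_iff {H : SimpleGraph V} :
    movedEdges τ ⊆ H.edgeFinset ↔ MovesAlong H τ := by
  simp [movedEdges, MovesAlong, Finset.image_subset_iff]

theorem prod_edgeM_movedEdges (G : SimpleGraph V) (hτ : Function.Involutive τ) :
    ∏ e ∈ movedEdges τ, edgeM G e = ∏ v ∈ τ.support, (G.degree v : ℝ)⁻¹ :=
  prod_movedEdges hτ _ _ fun v w => by simp [edgeM, mul_comm]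

theorem matchSum_edgeFinset_eq_sum_involutive (G H : SimpleGraph V) (t : ℕ) :
    matchSum G H.edgeFinset t =
      ∑ τ ∈ movingPerms H (2 * t) with Function.Involutive (τ : Equiv.Perm V),
        ∏ v ∈ τ.support, (G.degree v : ℝ)⁻¹ := by
  rw [matchSum]
  symm
  refine Finset.sum_nbij movedEdges (fun τ hτ => ?_) ?_ (fun S hS => ?_) fun τ hτ => ?_
  · simp only [Finset.mem_filter, mem_movingPerms] at hτ
    obtain ⟨⟨hmoves, hcard⟩, hinv⟩ := hτ
    rw [card_support_eq_two_mul_card_movedEdges hinv] at hcard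
    simp only [Finset.mem_filter, Finset.mem_powerset]
    exact ⟨movedEdges_subset_edgeFinset_iff.2 hmoves, Nat.eq_of_mul_eq_mul_left two_pos hcard,
      isMatching_movedEdges hinv⟩
  · exact movedEdges_injOn.mono fun τ hτ => (Finset.mem_filter.1 hτ).2
  · simp only [Finset.coe_filter, Finset.mem_powerset, Set.mem_ofPred_eq] at hS
    obtain ⟨hsub, hcard, hmatch⟩ := hS
    obtain ⟨τ, hinv, rfl⟩ := exists_involutive_movedEdges_eq hmatch fun v hv =>
      H.irrefl (SimpleGraph.mem_edgeFinset.1 (hsub hv))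
    have hmem : τ ∈ movingPerms H (2 * t) := mem_movingPerms.2
      ⟨movedEdges_subset_edgeFinset_iff.1 hsub, by
        rw [card_support_eq_two_mul_card_movedEdges hinv, hcard]⟩
    exact ⟨τ, Finset.mem_filter.2 ⟨hmem, hinv⟩, rfl⟩
  · exact (prod_edgeM_movedEdges G (Finset.mem_filter.1 hτ).2).symm

theorem sum_permWeight_of_isAcyclic (G : SimpleGraph V) {H : SimpleGraph V} (hH : H.IsAcyclic)
    (t : ℕ) :
    ∑ τ ∈ movingPerms H (2 * t), permWeight G τ = (-1) ^ t * matchSum G H.edgeFinset t := by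
  have hinv : ∀ τ ∈ movingPerms H (2 * t), Function.Involutive τ := fun τ hτ =>
    (mem_movingPerms.1 hτ).1.involutive_of_isAcyclic hH
  rw [matchSum_edgeFinset_eq_sum_involutive, Finset.filter_true_of_mem hinv, Finset.mul_sum]
  refine Finset.sum_congr rfl fun τ hτ => ?_
  rw [permWeight, sign_of_involutive (hinv τ hτ) (mem_movingPerms.1 hτ).2]
  push_cast
  rfl

end Matchings

/-- The closed walk `c 0, c 1, …, c (k - 1), c 0` is a cycle of `G`, and it is the only one:
every other edge is a bridge. The graph need not be connected. -/
structure IsUniqueCycle {k : ℕ} (G : SimpleGraph V) (c : ZMod k → V) : Prop where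
  three_le : 3 ≤ k
  injective : Function.Injective c
  adj : ∀ i, G.Adj (c i) (c (i + 1))
  isBridge : ∀ e ∈ G.edgeSet, (∀ i, e ≠ s(c i, c (i + 1))) → G.IsBridge e

section ConnectedGraph

variable {k : ℕ} {G : SimpleGraph V} {c : ZMod k → V}

theorem cycleGraph_isContained (hk : 2 ≤ k) (hc : Function.Injective c)
    (hadj : ∀ i, G.Adj (c i) (c (i + 1))) : (SimpleGraph.cycleGraph k).IsContained G := by
  obtain ⟨m, rfl⟩ := Nat.exists_eq_add_of_le' hk
  refine ⟨⟨⟨c, fun {u v} huv => ?_⟩, hc⟩⟩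
  rcases SimpleGraph.cycleGraph_adj.1 huv with h | h
  · rw [sub_eq_iff_eq_add'.1 h]
    exact (hadj v).symm
  · rw [sub_eq_iff_eq_add'.1 h]
    exact hadj u

theorem isUniqueCycle_of_connected [Finite V] (hconn : G.Connected)
    (hcard : Nat.card G.edgeSet = Nat.card V) (hk : 3 ≤ k) (hc : Function.Injective c)
    (hadj : ∀ i, G.Adj (c i) (c (i + 1))) : IsUniqueCycle G c := by
  refine ⟨hk, hc, hadj, fun e he hoff => ?_⟩
  induction e with | _ x y
  -- Otherwise deleting the edge would leave a tree which still contains the cycle.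
  by_contra hbridge
  have hcard' : Nat.card (G.deleteEdges {s(x, y)}).edgeSet + 1 = Nat.card V := by
    rw [SimpleGraph.edgeSet_deleteEdges, Nat.card_coe_set_eq,
      Set.ncard_sdiff_singleton_add_one he, ← hcard, Nat.card_coe_set_eq]
  have htree : (G.deleteEdges {s(x, y)}).IsTree := SimpleGraph.isTree_iff_connected_and_card.2
    ⟨hconn.connected_delete_edge_of_not_isBridge hbridge, hcard'⟩
  exact SimpleGraph.isAcyclic_iff_free_cycleGraph.1 htree.isAcyclic k hk
    (cycleGraph_isContained (by omega) hc fun i =>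
      SimpleGraph.deleteEdges_adj.2 ⟨hadj i, (hoff i).symm⟩)

end ConnectedGraph

/-- The graph obtained from `G` by deleting all edges that meet `s`, still on the vertex type `V`
so that it can be compared with `G` through permutations of `V`. -/
def isolateVerts (G : SimpleGraph V) (s : Set V) : SimpleGraph V :=
  (G.induce sᶜ).spanningCoe

theorem isolateVerts_adj {G : SimpleGraph V} {s : Set V} {v w : V} :
    (isolateVerts G s).Adj v w ↔ G.Adj v w ∧ v ∉ s ∧ w ∉ s := by
  simp [isolateVerts]

namespace IsUniqueCycle

variable {k : ℕ} {G : SimpleGraph V} {c : ZMod k → V} {σ : Equiv.Perm V}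

theorem apply_add_two_ne (h : IsUniqueCycle G c) (i : ZMod k) : c (i + 1 + 1) ≠ c i := by
  intro heq
  have htwo : ((2 : ℕ) : ZMod k) = 0 := by
    push_cast
    linear_combination h.injective heq
  have := Nat.le_of_dvd two_pos ((ZMod.natCast_eq_zero_iff 2 k).1 htwo)
  have := h.three_le
  omega

theorem isAcyclic_isolateVerts (h : IsUniqueCycle G c) :
    (isolateVerts G (Set.range c)).IsAcyclic := by
  refine SimpleGraph.isAcyclic_iff_forall_adj_isBridge.2 fun v w hvw => ?_
  obtain ⟨hadj, hv, -⟩ := isolateVerts_adj.1 hvw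
  refine (h.isBridge _ hadj fun i hi => ?_).anti fun _ _ h' => (isolateVerts_adj.1 h').1
  rcases Sym2.eq_iff.1 hi with ⟨rfl, -⟩ | ⟨rfl, -⟩ <;> exact hv ⟨_, rfl⟩

theorem exists_mk_eq_of_apply_apply_ne [Finite V] (h : IsUniqueCycle G c) (hσ : MovesAlong G σ)
    {v : V} (hv : σ (σ v) ≠ v) : ∃ i, s(v, σ v) = s(c i, c (i + 1)) := by
  by_contra! hoff
  have hmoved : σ v ≠ v := fun heq => hv (by rw [heq, heq])
  exact hv (hσ.apply_apply_of_isBridge (h.isBridge _ (hσ v hmoved) hoff))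

theorem apply_eq_add_one_of_apply_apply_ne [Finite V] [NeZero k] (h : IsUniqueCycle G c)
    (hσ : MovesAlong G σ) {i : ZMod k} (hi : σ (c i) = c (i + 1)) (hne : σ (σ (c i)) ≠ c i) :
    ∀ j, σ (c j) = c (j + 1) := by
  have hstep : ∀ j, σ (c j) = c (j + 1) ∧ σ (σ (c j)) ≠ c j →
      σ (c (j + 1)) = c (j + 1 + 1) ∧ σ (σ (c (j + 1))) ≠ c (j + 1) := by
    rintro j ⟨hj, hjne⟩
    have hnext : σ (σ (c (j + 1))) ≠ c (j + 1) := by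
      rw [← hj]
      exact fun heq => hjne (σ.injective heq)
    refine ⟨?_, hnext⟩
    obtain ⟨l, hl⟩ := h.exists_mk_eq_of_apply_apply_ne hσ hnext
    rcases Sym2.eq_iff.1 hl with ⟨hjl, hσl⟩ | ⟨hjl, hσl⟩
    · rw [hσl, h.injective hjl]
    · rw [hj, hσl, add_right_cancel (h.injective hjl)] at hjne
      exact absurd rfl hjne
  have hall : ∀ m : ℕ, σ (c (i + m)) = c (i + m + 1) ∧ σ (σ (c (i + m))) ≠ c (i + m) := by
    intro m
    induction m with
    | zero => simpa using ⟨hi, hne⟩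
    | succ m ih => simpa [add_assoc] using hstep _ ih
  intro j
  simpa using (hall (j - i).val).1

theorem rotates_or_inv_rotates [Finite V] [NeZero k] (h : IsUniqueCycle G c)
    (hσ : MovesAlong G σ) (hinv : ¬Function.Involutive σ) :
    (∀ i, σ (c i) = c (i + 1)) ∨ ∀ i, σ⁻¹ (c i) = c (i + 1) := by
  obtain ⟨v, hv⟩ := not_forall.1 hinv
  obtain ⟨i, hi⟩ := h.exists_mk_eq_of_apply_apply_ne hσ hv
  rcases Sym2.eq_iff.1 hi with ⟨rfl, hσi⟩ | ⟨rfl, hσi⟩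
  · exact Or.inl (h.apply_eq_add_one_of_apply_apply_ne hσ hσi hv)
  · have hσi' : σ⁻¹ (c i) = c (i + 1) := Equiv.Perm.inv_eq_iff_eq.2 hσi.symm
    refine Or.inr (h.apply_eq_add_one_of_apply_apply_ne hσ.inv hσi' fun heq => hv ?_)
    rw [hσi', Equiv.Perm.inv_eq_iff_eq, ← hσi] at heq
    exact heq.symm

theorem inv_rotates_iff [Finite V] [NeZero k] (h : IsUniqueCycle G c) (hσ : MovesAlong G σ)
    (hinv : ¬Function.Involutive σ) :
    (∀ i, σ⁻¹ (c i) = c (i + 1)) ↔ ¬∀ i, σ (c i) = c (i + 1) := by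
  refine ⟨fun hback hforth => ?_, (h.rotates_or_inv_rotates hσ hinv).resolve_left⟩
  have heq := hback (0 + 1)
  rw [Equiv.Perm.inv_eq_iff_eq, hforth] at heq
  exact h.apply_add_two_ne _ heq.symm

theorem sum_permWeight_of_odd [Fintype V] [DecidableEq V] [NeZero k] (h : IsUniqueCycle G c)
    {j : ℕ} (hj : Odd j) :
    ∑ σ ∈ movingPerms G j, permWeight G σ =
      2 * ∑ σ ∈ movingPerms G j with ∀ i, σ (c i) = c (i + 1), permWeight G σ := by
  have hinv : ∀ σ ∈ movingPerms G j, ¬Function.Involutive σ := by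
    intro σ hσ hinv
    rw [← (mem_movingPerms.1 hσ).2, card_support_eq_two_mul_card_movedEdges hinv] at hj
    exact Nat.not_odd_iff_even.2 (even_two_mul _) hj
  have hback : ∑ σ ∈ movingPerms G j with ¬∀ i, σ (c i) = c (i + 1), permWeight G σ =
      ∑ σ ∈ movingPerms G j with ∀ i, σ (c i) = c (i + 1), permWeight G σ := by
    refine Finset.sum_equiv (Equiv.inv _) (fun σ => ?_) fun σ _ => (permWeight_inv G σ).symm
    simp only [Finset.mem_filter, Equiv.inv_apply, inv_mem_movingPerms]
    exact and_congr_right fun hσ =>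
      (h.inv_rotates_iff (mem_movingPerms.1 hσ).1 (hinv σ hσ)).symm
  rw [← Finset.sum_filter_add_sum_filter_not _ fun σ => ∀ i, σ (c i) = c (i + 1), hback, two_mul]

end IsUniqueCycle

section CycleRotation

variable {k : ℕ} {c : ZMod k → V}

/-- The permutation `c i ↦ c (i + 1)` of the vertices of a cycle, fixing all other vertices. -/
noncomputable def cycleRotation (hc : Function.Injective c) : Equiv.Perm V :=
  Equiv.Perm.extendDomain (Equiv.addRight 1) (Equiv.ofInjective c hc)

theorem cycleRotation_apply (hc : Function.Injective c) (i : ZMod k) :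
    cycleRotation hc (c i) = c (i + 1) :=
  Equiv.Perm.extendDomain_apply_image _ (Equiv.ofInjective c hc) i

theorem cycleRotation_apply_of_notMem (hc : Function.Injective c) {v : V}
    (hv : v ∉ Set.range c) : cycleRotation hc v = v :=
  Equiv.Perm.extendDomain_apply_not_subtype _ _ hv

theorem cycleRotation_disjoint (hc : Function.Injective c) {τ : Equiv.Perm V}
    (hτ : ∀ i, τ (c i) = c i) : (cycleRotation hc).Disjoint τ := by
  intro v
  by_cases hv : v ∈ Set.range c
  · obtain ⟨i, rfl⟩ := hv
    exact Or.inr (hτ i)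
  · exact Or.inl (cycleRotation_apply_of_notMem hc hv)

variable [Fintype V] [DecidableEq V] [NeZero k]

theorem support_cycleRotation (hc : Function.Injective c) (hk : k ≠ 1) :
    (cycleRotation hc).support = Finset.univ.map ⟨c, hc⟩ := by
  have : Nontrivial (ZMod k) := ZMod.nontrivial_iff.2 hk
  ext v
  by_cases hv : v ∈ Set.range c
  · obtain ⟨i, rfl⟩ := hv
    simp [cycleRotation_apply, hc.eq_iff]
  · simpa [cycleRotation_apply_of_notMem hc hv] using hv

theorem card_support_cycleRotation (hc : Function.Injective c) (hk : k ≠ 1) :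
    (cycleRotation hc).support.card = k := by
  rw [support_cycleRotation hc hk, Finset.card_map, Finset.card_univ, ZMod.card]

theorem sign_cycleRotation (hc : Function.Injective c) (hk : Odd k) :
    Equiv.Perm.sign (cycleRotation hc) = 1 := by
  have hpow : (Equiv.addRight (1 : ZMod k)) ^ k = 1 := by
    ext i
    simp
  have hsign := congrArg Equiv.Perm.sign hpow
  rw [map_pow, Int.units_pow_eq_pow_mod_two, Nat.odd_iff.1 hk, pow_one, map_one] at hsign
  rw [cycleRotation, Equiv.Perm.sign_extendDomain, hsign]

theorem permWeight_cycleRotation (G : SimpleGraph V) (hc : Function.Injective c) (hk : Odd k)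
    (hk1 : k ≠ 1) :
    permWeight G (cycleRotation hc) = ∏ i, (G.degree (c i) : ℝ)⁻¹ := by
  rw [permWeight, sign_cycleRotation hc hk, support_cycleRotation hc hk1, Finset.prod_map]
  simp

end CycleRotation

section RotatingPerms

variable {k : ℕ} {G : SimpleGraph V} {c : ZMod k → V} {τ : Equiv.Perm V}

theorem movesAlong_isolateVerts_iff {s : Set V} :
    MovesAlong (isolateVerts G s) τ ↔ (∀ v ∈ s, τ v = v) ∧ MovesAlong G τ := by
  refine ⟨fun h => ⟨fun v hv => not_not.1 fun hne => (isolateVerts_adj.1 (h v hne)).2.1 hv,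
    fun v hv => (isolateVerts_adj.1 (h v hv)).1⟩, fun ⟨hfix, h⟩ v hv => ?_⟩
  refine isolateVerts_adj.2 ⟨h v hv, fun hs => hv (hfix v hs), fun hs => hv ?_⟩
  exact τ.injective (hfix _ hs)

theorem movesAlong_cycleRotation_mul_iff (hc : Function.Injective c)
    (hadj : ∀ i, G.Adj (c i) (c (i + 1))) (hτ : ∀ i, τ (c i) = c i) :
    MovesAlong G (cycleRotation hc * τ) ↔ MovesAlong G τ := by
  have hon : ∀ i, (cycleRotation hc * τ) (c i) = c (i + 1) := fun i => by
    rw [Equiv.Perm.mul_apply, hτ, cycleRotation_apply]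
  have hoff : ∀ v, v ∉ Set.range c → (cycleRotation hc * τ) v = τ v := by
    refine fun v hv => cycleRotation_apply_of_notMem hc ?_
    rintro ⟨i, hi⟩
    exact hv ⟨i, τ.injective ((hτ i).trans hi)⟩
  refine forall_congr' fun v => ?_
  by_cases hv : v ∈ Set.range c
  · obtain ⟨i, rfl⟩ := hv
    simp [hon, hτ, hadj i]
  · rw [hoff v hv]

theorem cycleRotation_mul_rotates_iff (hc : Function.Injective c) :
    (∀ i, (cycleRotation hc * τ) (c i) = c (i + 1)) ↔ ∀ i, τ (c i) = c i := by
  refine forall_congr' fun i => ?_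
  rw [Equiv.Perm.mul_apply, ← cycleRotation_apply hc i, (cycleRotation hc).injective.eq_iff]

theorem sum_permWeight_rotating [Fintype V] [DecidableEq V] [NeZero k]
    (hc : Function.Injective c) (hadj : ∀ i, G.Adj (c i) (c (i + 1))) (hk : k ≠ 1) (j : ℕ) :
    ∑ σ ∈ movingPerms G (k + j) with ∀ i, σ (c i) = c (i + 1), permWeight G σ =
      permWeight G (cycleRotation hc) *
        ∑ τ ∈ movingPerms (isolateVerts G (Set.range c)) j, permWeight G τ := by
  rw [Finset.mul_sum]
  symm
  have hmem : ∀ τ, τ ∈ movingPerms (isolateVerts G (Set.range c)) j ↔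
      (∀ i, τ (c i) = c i) ∧ τ ∈ movingPerms G j := by
    intro τ
    rw [mem_movingPerms, mem_movingPerms, movesAlong_isolateVerts_iff, Set.forall_mem_range,
      and_assoc]
  refine Finset.sum_equiv (Equiv.mulLeft (cycleRotation hc)) (fun τ => ?_) fun τ hτ =>
    (permWeight_mul_of_disjoint G (cycleRotation_disjoint hc ((hmem τ).1 hτ).1)).symm
  rw [hmem, Finset.mem_filter, Equiv.coe_mulLeft, cycleRotation_mul_rotates_iff, and_comm]
  refine and_congr_left fun hfix => ?_
  rw [mem_movingPerms, mem_movingPerms, movesAlong_cycleRotation_mul_iff hc hadj hfix,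
    (cycleRotation_disjoint hc hfix).card_support_mul, card_support_cycleRotation hc hk,
    Nat.add_left_cancel_iff]

end RotatingPerms

theorem charpoly_coeff_eq_matchSum_general [Fintype V] [DecidableEq V] {k : ℕ} [NeZero k]
    {G : SimpleGraph V} {c : ZMod k → V} (h : IsUniqueCycle G c) (hk : Odd k) (t : ℕ)
    (htn : k + 2 * t ≤ Fintype.card V) :
    (transition G).charpoly.coeff (Fintype.card V - k - 2 * t) =
      (-1) ^ (t + 1) * 2 * (∏ i, (G.degree (c i) : ℝ)⁻¹) *
        matchSum G (isolateVerts G (Set.range c)).edgeFinset t := by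
  have hodd : Odd (k + 2 * t) := hk.add_even (even_two_mul t)
  have hk1 : k ≠ 1 := by
    have := h.three_le
    omega
  rw [Nat.sub_sub, coeff_charpoly_transition G htn, h.sum_permWeight_of_odd hodd,
    sum_permWeight_rotating h.injective h.adj hk1, permWeight_cycleRotation G h.injective hk hk1,
    sum_permWeight_of_isAcyclic G h.isAcyclic_isolateVerts, hodd.neg_one_pow]
  ring

section DegreeTwoCycle

variable [Fintype V] {k : ℕ} {G : SimpleGraph V} {c : ZMod k → V}

namespace IsUniqueCycle

theorem eq_or_eq_of_adj (h : IsUniqueCycle G c) {i : ZMod k} (hi : G.degree (c i) = 2) {v : V}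
    (hv : G.Adj (c i) v) : v = c (i + 1) ∨ v = c (i - 1) := by
  have hprev : G.Adj (c i) (c (i - 1)) := by simpa using (h.adj (i - 1)).symm
  have hne : c (i + 1) ≠ c (i - 1) := by simpa using h.apply_add_two_ne (i - 1)
  have hnbrs : {c (i + 1), c (i - 1)} = G.neighborFinset (c i) := by
    refine Finset.eq_of_subset_of_card_le (fun w hw => ?_) ?_
    · rw [SimpleGraph.mem_neighborFinset]
      rcases Finset.mem_insert.1 hw with rfl | hw
      · exact h.adj i
      · rwa [Finset.mem_singleton.1 hw]
    · rw [SimpleGraph.card_neighborFinset_eq_degree, hi, Finset.card_pair hne]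
  simpa [← hnbrs] using (G.mem_neighborFinset _ _).2 hv

theorem treeEdges_eq (h : IsUniqueCycle G c) (hdeg : ∀ i, i ≠ 0 → G.degree (c i) = 2) :
    treeEdges G c = (isolateVerts G (Set.range c)).edgeFinset := by
  have hoff : ∀ {v w}, G.Adj v w → (∀ i, s(v, w) ≠ s(c i, c (i + 1))) → c 0 ≠ v →
      v ∉ Set.range c := by
    rintro _ w hadj hne h0 ⟨i, rfl⟩
    rcases h.eq_or_eq_of_adj (hdeg i fun hi => h0 (by rw [hi])) hadj with rfl | rfl
    · exact hne i rfl
    · exact hne (i - 1) (by rw [Sym2.eq_swap, sub_add_cancel])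
  ext ⟨v, w⟩
  simp only [treeEdges, Finset.mem_filter, SimpleGraph.mem_edgeFinset, SimpleGraph.mem_edgeSet,
    Sym2.mem_iff, not_or, isolateVerts_adj]
  constructor
  · rintro ⟨hadj, hne, hv, hw⟩
    exact ⟨hadj, hoff hadj hne hv,
      hoff hadj.symm (fun i => Sym2.eq_swap.trans_ne (hne i)) hw⟩
  · rintro ⟨hadj, hv, hw⟩
    refine ⟨hadj, fun i hi => ?_, fun h0 => hv ⟨0, h0⟩, fun h0 => hw ⟨0, h0⟩⟩
    rcases Sym2.eq_iff.1 hi with ⟨rfl, -⟩ | ⟨rfl, -⟩ <;> exact hv ⟨_, rfl⟩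

end IsUniqueCycle

theorem prod_inv_degree_cycle [NeZero k] (hdegu : G.degree (c 0) = 4)
    (hdegc : ∀ i, i ≠ 0 → G.degree (c i) = 2) :
    ∏ i, (G.degree (c i) : ℝ)⁻¹ = 1 / 2 ^ (k + 1) := by
  have htwo : ∀ i ∈ Finset.univ.erase (0 : ZMod k), (G.degree (c i) : ℝ)⁻¹ = 2⁻¹ := fun i hi => by
    rw [hdegc i (Finset.ne_of_mem_erase hi), Nat.cast_ofNat]
  obtain ⟨m, hm⟩ := Nat.exists_eq_succ_of_ne_zero (NeZero.ne k)
  have hcard : (Finset.univ.erase (0 : ZMod k)).card = m := by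
    rw [Finset.card_erase_of_mem (Finset.mem_univ _), Finset.card_univ, ZMod.card, hm,
      Nat.succ_sub_one]
  rw [← Finset.mul_prod_erase _ _ (Finset.mem_univ 0), hdegu, Finset.prod_congr rfl htwo,
    Finset.prod_const, hcard, hm, pow_succ, pow_succ, inv_pow, Nat.cast_ofNat]
  field_simp
  norm_num

end DegreeTwoCycle

/-- In the cycle-plus-tree setting (`G ∈ 𝒪(k)`, `deg u = 4` for the cycle
vertex `u = c 0` and degree `2` for the other cycle vertices), for every `t ≥ 1` with
`k + 2t ≤ n` one has `ρ_(n-k-2t) = (-1)^(t+1) · 2^(-k) · K_(2t)`. -/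
theorem charpoly_coeff_eq_matchSum {V : Type*} [Fintype V] [DecidableEq V] (G : SimpleGraph V)
    (hconn : G.Connected) (k : ℕ) [NeZero k] (hk3 : 3 ≤ k) (hkodd : Odd k)
    (c : ZMod k → V) (hcinj : Function.Injective c)
    (hcadj : ∀ i : ZMod k, G.Adj (c i) (c (i + 1)))
    (hcard : Fintype.card V = G.edgeFinset.card)
    (hdegu : G.degree (c 0) = 4) (hdegc : ∀ i : ZMod k, i ≠ 0 → G.degree (c i) = 2)
    (t : ℕ) (ht : 1 ≤ t) (htn : k + 2 * t ≤ Fintype.card V) :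
    (transition G).charpoly.coeff (Fintype.card V - k - 2 * t) =
      (-1 : ℝ) ^ (t + 1) / 2 ^ k * Km G c t  := by
  have hedges : Nat.card G.edgeSet = Nat.card V := by
    simp only [Nat.card_eq_fintype_card, hcard, SimpleGraph.edgeFinset_card]
  have h : IsUniqueCycle G c := isUniqueCycle_of_connected hconn hedges hk3 hcinj hcadj
  rw [charpoly_coeff_eq_matchSum_general h hkodd t htn, prod_inv_degree_cycle hdegu hdegc, Km,
    h.treeEdges_eq hdegc]
  ring

end GroverPaper
end
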